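/- arXiv:2506.14899 — 2 statements merged into one kernel-verified Lean document; each statement's English description precedes it below -/
import Mathlib

section
/- Let n, d ∈ ℕ, q ∈ ℕ∪{0}, K, d⋆, d* ∈ ℕ, β, r, α ∈ (0,∞), τ ∈ (0,∞], s ∈ [0,∞]. Assume d* ≤ d, d*·q ≤ K·q, and not both α < 1 and τ ≥ 1. Set e := β·(min{1,β})^q. Then there exist a constant c6 ∈ (0,∞) depending only on (d,q,K,d⋆,d*,β,r,τ,α) and an estimator f̂_n based on the i.i.d. sample of size n such that sup{E_{P^⊗n}[E_P(f̂_n)] : P ∈ H^{d,β,r}_{q,K,d*,d⋆} ∩ T^{d,s}_{α,τ}} ≤ c6·(1/n)^{e/(d*/(s+1) + (1+1/(s+1))·e)}, where 1/(s+1) := 0 and d*/(s+1) := 0 when s = ∞. -/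
open MeasureTheory ENNReal Set

noncomputable section

namespace ZZS

/-! ## Basic geometry -/

/-- The closed unit cube `[0,1]^m`. -/
def cube (m : ℕ) : Set (Fin m → ℝ) := Set.univ.pi fun _ => Set.Icc (0 : ℝ) 1

/-- The open unit cube `(0,1)^m`. -/
def cubeo (m : ℕ) : Set (Fin m → ℝ) := Set.univ.pi fun _ => Set.Ioo (0 : ℝ) 1

/-- The label set `{-1, 1} ⊆ ℝ`. -/
def labels : Set ℝ := {-1, 1}

/-- Euclidean distance on `Fin m → ℝ`. -/
def e2 {m : ℕ} (x z : Fin m → ℝ) : ℝ := Real.sqrt (∑ i, (x i - z i) ^ 2)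

/-! ## Multi-index partial derivatives and Hölder balls -/

/-- Iterated partial derivative along a list of coordinate directions. -/
def pderivList {m : ℕ} : List (Fin m) → ((Fin m → ℝ) → ℝ) → (Fin m → ℝ) → ℝ
  | [], f => f
  | i :: l, f => pderivList l fun x => fderiv ℝ f x (Pi.single i 1)

/-- The canonical list of directions attached to a multi-index. -/
def idxList {m : ℕ} (u : Fin m → ℕ) : List (Fin m) :=
  (List.finRange m).flatMap fun i => List.replicate (u i) i

/-- The partial derivative `D^u f` for a multi-index `u`. -/
def Dm {m : ℕ} (u : Fin m → ℕ) (f : (Fin m → ℝ) → ℝ) : (Fin m → ℝ) → ℝ :=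
  pderivList (idxList u) f

/-- The order `‖u‖₁` of a multi-index `u`. -/
def mord {m : ℕ} (u : Fin m → ℕ) : ℕ := ∑ i, u i

/-- The Hölder-`β` norm of `f`, suprema taken over the set `S` (value in `ℝ≥0∞`). -/
def holderNormOn (m : ℕ) (β : ℝ) (S : Set (Fin m → ℝ)) (f : (Fin m → ℝ) → ℝ) : ℝ≥0∞ :=
  (⨆ (u : Fin m → ℕ) (_ : (mord u : ℝ) < β) (x ∈ S), ENNReal.ofReal |Dm u f x|) +
    ⨆ (u : Fin m → ℕ) (_ : (⌈β⌉ : ℝ) - 1 ≤ (mord u : ℝ) ∧ (mord u : ℝ) < β)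
      (x ∈ S) (z ∈ S) (_ : x ≠ z),
      ENNReal.ofReal |Dm u f x - Dm u f z| /
        ENNReal.ofReal (e2 x z) ^ (β + 1 - (⌈β⌉ : ℝ))

/-- `⌈β - 1⌉`, the number of derivatives required for Hölder-`β` smoothness. -/
def smoothOrder (β : ℝ) : ℕ := ⌈β - 1⌉₊

/-- The Hölder ball `B^β_r([0,1]^m)`:  `⌈β-1⌉`-times continuously differentiable functions on
the interior of the cube (with uniformly continuous derivatives, so that they extend
continuously), with Hölder-`β` norm at most `r`. -/
def HolderBall (m : ℕ) (β r : ℝ) : Set ((Fin m → ℝ) → ℝ) :=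
  {f | ContinuousOn f (cube m) ∧
    ContDiffOn ℝ (smoothOrder β : ℕ∞) f (cubeo m) ∧
    (∀ u : Fin m → ℕ, (mord u : ℝ) < β → UniformContinuousOn (Dm u f) (cubeo m)) ∧
    holderNormOn m β (cubeo m) f ≤ ENNReal.ofReal r}

/-! ## Compositional function classes -/

/-- `G^H_m(dstar, β, r)`: Hölder-`β` functions of `dstar` of the `m` coordinates. -/
def GH (m dstar : ℕ) (β r : ℝ) : Set ((Fin m → ℝ) → ℝ) :=
  {f | ∃ (e : Fin dstar → Fin m) (g : (Fin dstar → ℝ) → ℝ),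
    StrictMono e ∧ g ∈ HolderBall dstar β r ∧ ∀ x ∈ cube m, f x = g fun j => x (e j)}

/-- `G^M_m(dmax)`: maxima of at most `dmax` coordinates. -/
def GM (m dmax : ℕ) : Set ((Fin m → ℝ) → ℝ) :=
  {f | ∃ (I : Finset (Fin m)) (hI : I.Nonempty), I.card ≤ dmax ∧
    ∀ x ∈ cube m, f x = I.sup' hI fun i => x i}

/-- The compositional class `G^CHOM_d(q, K, dmax, dstar, β, r)`. -/
def GCHOM (K dmax dstar : ℕ) (β r : ℝ) : ℕ → (d : ℕ) → Set ((Fin d → ℝ) → ℝ)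
  | 0, d => {f | ∃ h ∈ GH d dstar β r ∪ GM d dmax, ∀ x ∈ cube d, f x = h x}
  | q + 1, d =>
    {f | ∃ (H : (Fin d → ℝ) → Fin K → ℝ) (g : (Fin K → ℝ) → ℝ),
      (∀ j, (fun x => H x j) ∈ GH d dstar β r ∪ GM d dmax) ∧
      (∀ x ∈ cube d, H x ∈ cube K) ∧
      g ∈ GCHOM K dmax dstar β r q K ∧ ∀ x ∈ cube d, f x = g (H x)}

/-- The compositional class `G^CH_d(q, K, dstar, β, r)` (no max-value components). -/
def GCH (K dstar : ℕ) (β r : ℝ) : ℕ → (d : ℕ) → Set ((Fin d → ℝ) → ℝ)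
  | 0, d => {f | ∃ h ∈ GH d dstar β r, ∀ x ∈ cube d, f x = h x}
  | q + 1, d =>
    {f | ∃ (H : (Fin d → ℝ) → Fin K → ℝ) (g : (Fin K → ℝ) → ℝ),
      (∀ j, (fun x => H x j) ∈ GH d dstar β r) ∧
      (∀ x ∈ cube d, H x ∈ cube K) ∧
      g ∈ GCH K dstar β r q K ∧ ∀ x ∈ cube d, f x = g (H x)}

/-! ## Losses, risks, and data distributions -/

/-- The sign function (`sgn 0 = 1`). -/
def sgn (t : ℝ) : ℝ := if 0 ≤ t then 1 else -1

/-- The hinge loss. -/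
def hinge (t : ℝ) : ℝ := max 0 (1 - t)

/-- The truncation operator `T_F`. -/
def trunc (F t : ℝ) : ℝ := min F (max (-F) t)

/-- The joint distribution `P_{η,Q}` on `[0,1]^d × {-1,1}` with input marginal `Q` and
conditional class probability function `η`. -/
def jointMeasure {d : ℕ} (η : (Fin d → ℝ) → ℝ) (Q : Measure (Fin d → ℝ)) :
    Measure ((Fin d → ℝ) × ℝ) :=
  Q.bind fun x =>
    ENNReal.ofReal (η x) • Measure.dirac (x, (1 : ℝ)) +
      ENNReal.ofReal (1 - η x) • Measure.dirac (x, (-1 : ℝ))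

/-- The 0-1 risk (misclassification error). -/
def risk01 {d : ℕ} (P : Measure ((Fin d → ℝ) × ℝ)) (f : (Fin d → ℝ) → ℝ) : ℝ :=
  (P {p | sgn (f p.1) ≠ p.2}).toReal

/-- The infimum of the 0-1 risk over all measurable functions. -/
def bayes01 {d : ℕ} (P : Measure ((Fin d → ℝ) × ℝ)) : ℝ :=
  ⨅ g : {g : (Fin d → ℝ) → ℝ // Measurable g}, risk01 P g.1

/-- The excess 0-1 risk. -/
def excess01 {d : ℕ} (P : Measure ((Fin d → ℝ) × ℝ)) (f : (Fin d → ℝ) → ℝ) : ℝ :=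
  risk01 P f - bayes01 P

/-- The `φ`-risk. -/
def riskPhi {d : ℕ} (φ : ℝ → ℝ) (P : Measure ((Fin d → ℝ) × ℝ)) (f : (Fin d → ℝ) → ℝ) : ℝ :=
  ∫ p, φ (p.2 * f p.1) ∂P

/-- The infimum of the `φ`-risk over all measurable functions. -/
def bayesPhi {d : ℕ} (φ : ℝ → ℝ) (P : Measure ((Fin d → ℝ) × ℝ)) : ℝ :=
  ⨅ g : {g : (Fin d → ℝ) → ℝ // Measurable g}, riskPhi φ P g.1

/-- The excess `φ`-risk. -/
def excessPhi {d : ℕ} (φ : ℝ → ℝ) (P : Measure ((Fin d → ℝ) × ℝ)) (f : (Fin d → ℝ) → ℝ) : ℝ :=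
  riskPhi φ P f - bayesPhi φ P

/-- A Borel probability measure on `[0,1]^d × {-1,1}`, presented by its input marginal `Q`
(a Borel probability measure concentrated on the cube) and its conditional class
probability function `η` (measurable, `[0,1]`-valued);  the measure itself is
`jointMeasure η Q`. -/
structure DataDist (d : ℕ) where
  η : (Fin d → ℝ) → ℝ
  Q : Measure (Fin d → ℝ)
  η_meas : Measurable η
  η_mem : ∀ x, η x ∈ Set.Icc (0 : ℝ) 1
  Q_prob : IsProbabilityMeasure Q
  Q_cube : Q (cube d) = 1

/-- The measure on `[0,1]^d × {-1,1}` associated with a `DataDist`. -/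
def DataDist.P {d : ℕ} (D : DataDist d) : Measure ((Fin d → ℝ) × ℝ) := jointMeasure D.η D.Q

/-- `x ^ s` for `s ∈ [0,∞]`, with the conventions `x ^ ∞ = 0` for `x < 1` and `1 ^ ∞ = 1`. -/
def rpowE (x : ℝ≥0∞) (s : ℝ≥0∞) : ℝ≥0∞ :=
  if s = ∞ then (if x < 1 then 0 else if x = 1 then 1 else ∞) else x ^ s.toReal

/-- The Tsybakov noise class `T^{d,s}_{α,τ}` (noise exponent `s ∈ [0,∞]`,
threshold `τ ∈ (0,∞]`). -/
def Tsybakov (d : ℕ) (s : ℝ≥0∞) (α : ℝ) (τ : ℝ≥0∞) : Set (DataDist d) :=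
  {P | ∀ t : ℝ, 0 < t → ENNReal.ofReal t ≤ τ →
    P.Q ({x | |2 * P.η x - 1| ≤ t} ∩ cube d) ≤ ENNReal.ofReal α * rpowE (ENNReal.ofReal t) s}

/-- The class `H^{d,β,r}_{q,K,dstar,dmax}`: distributions whose conditional class probability
agrees a.s. with a member of `G^CHOM`. -/
def HCHOM (d q K dstar dmax : ℕ) (β r : ℝ) : Set (DataDist d) :=
  {P | ∃ f ∈ GCHOM K dmax dstar β r q d, ∀ᵐ x ∂P.Q, P.η x = f x}

/-- `M_{Λ,d}`: Borel probability measures on `[0,1]^d` with a `[0,Λ]`-valued density with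
respect to Lebesgue measure. -/
def MLam (d : ℕ) (Λ : ℝ) : Set (Measure (Fin d → ℝ)) :=
  {Q | ∃ g : (Fin d → ℝ) → ℝ, Measurable g ∧ (∀ x, g x ∈ Set.Icc 0 Λ) ∧
    Q = (volume.restrict (cube d)).withDensity fun x => ENNReal.ofReal (g x)}

/-- The class `H^{d,β,r,Λ}_{q,K,dstar}`: joint laws `P_{η,Q}` with `η ∈ G^CH` (valued in
`[0,1]`) and `Q ∈ M_{Λ,d}`. -/
def HCHL (d q K dstar : ℕ) (β r Λ : ℝ) : Set (DataDist d) :=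
  {P | (∃ f ∈ GCH K dstar β r q d, (∀ x ∈ cube d, f x ∈ Set.Icc (0 : ℝ) 1) ∧
      ∀ᵐ x ∂P.Q, P.η x = f x) ∧ P.Q ∈ MLam d Λ}

/-- The class `H^{d,β,r}_{q,K,dstar}`: joint laws `P_{η,Q}` with `η ∈ G^CH` (valued in
`[0,1]`) and `Q` an arbitrary Borel probability measure on the cube. -/
def HCH (d q K dstar : ℕ) (β r : ℝ) : Set (DataDist d) :=
  {P | ∃ f ∈ GCH K dstar β r q d, (∀ x ∈ cube d, f x ∈ Set.Icc (0 : ℝ) 1) ∧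
    ∀ᵐ x ∂P.Q, P.η x = f x}

/-! ## Samples and estimators -/

/-- The law of an i.i.d. sample of size `n` from `μ`. -/
def iid {α : Type*} [MeasurableSpace α] (μ : Measure α) : (n : ℕ) → Measure (Fin n → α)
  | 0 => Measure.dirac fun i => i.elim0
  | n + 1 => (iid μ n).bind fun p => μ.map fun a => Fin.snoc p a

/-- An estimator: a rule assigning to each sample of size `n` a function `[0,1]^d → ℝ`. -/
def Estimator (d n : ℕ) := (Fin n → (Fin d → ℝ) × ℝ) → (Fin d → ℝ) → ℝ

/-- (Joint) measurability of an estimator. -/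
def Estimator.Meas {d n : ℕ} (A : Estimator d n) : Prop :=
  Measurable fun p : (Fin n → (Fin d → ℝ) × ℝ) × (Fin d → ℝ) => A p.1 p.2

/-- The expected excess 0-1 risk `E_{P^{⊗n}}[E_P(f̂_n)]` of an estimator. -/
def expectedExcess01 {d : ℕ} (P : Measure ((Fin d → ℝ) × ℝ)) {n : ℕ} (A : Estimator d n) : ℝ :=
  ∫ ω, excess01 P (A ω) ∂iid P n

/-- The covering number `N(F, γ)` (uniform norm over `Ω`), valued in `ℝ≥0∞`. -/
def coveringNumber {X : Type*} (Ω : Set X) (F : Set (X → ℝ)) (γ : ℝ) : ℝ≥0∞ :=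
  ⨅ (A : Finset (X → ℝ))
    (_ : ↑A ⊆ F ∧ ∀ f ∈ F, ∃ g ∈ A, ∀ x ∈ Ω, |f x - g x| ≤ γ),
    (A.card : ℝ≥0∞)

/-- `f` is an empirical `φ`-risk minimizer over `F` for the sample `ω`. -/
def IsERM {d n : ℕ} (φ : ℝ → ℝ) (F : Set ((Fin d → ℝ) → ℝ))
    (ω : Fin n → (Fin d → ℝ) × ℝ) (f : (Fin d → ℝ) → ℝ) : Prop :=
  f ∈ F ∧ ∀ g ∈ F,
    (n : ℝ)⁻¹ * ∑ i, φ ((ω i).2 * f ((ω i).1)) ≤ (n : ℝ)⁻¹ * ∑ i, φ ((ω i).2 * g ((ω i).1))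

/-! ## ReLU neural networks -/

/-- A feedforward ReLU network with input dimension `d`. -/
structure ReLUNet (d : ℕ) where
  L : ℕ
  width : ℕ → ℕ
  W : (i : ℕ) → Fin (width (i + 1)) → Fin (width i) → ℝ
  v : (i : ℕ) → Fin (width i) → ℝ
  h0 : width 0 = d
  hL : width (L + 1) = 1

/-- The `i`-th intermediate layer output `W_i σ_{v_i} ⋯ W_1 σ_{v_1} W_0 x`. -/
def ReLUNet.layer {d : ℕ} (net : ReLUNet d) (x : Fin (net.width 0) → ℝ) :
    (i : ℕ) → Fin (net.width (i + 1)) → ℝ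
  | 0 => fun j => ∑ k, net.W 0 j k * x k
  | i + 1 => fun j => ∑ k, net.W (i + 1) j k * max 0 (net.layer x i k - net.v (i + 1) k)

/-- The real-valued function computed by a ReLU network. -/
def ReLUNet.eval {d : ℕ} (net : ReLUNet d) (x : Fin d → ℝ) : ℝ :=
  net.layer (fun j => x (Fin.cast net.h0 j)) net.L (Fin.cast net.hL.symm 0)

/-- The class `F^NN_d(G, N, S, B, Fb)` of ReLU networks with depth `≤ G`, widths `≤ N`,
at most `S` nonzero parameters, parameter magnitudes `≤ B`, and uniform norm on the cube
`≤ Fb`. -/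
def FNN (d : ℕ) (G N : ℝ) (S : ℝ≥0∞) (B : ℝ) (Fb : ℝ≥0∞) : Set ((Fin d → ℝ) → ℝ) :=
  {f | ∃ net : ReLUNet d,
    (∀ x, f x = net.eval x) ∧
    (net.L : ℝ) ≤ G ∧
    (∀ i ≤ net.L + 1, (net.width i : ℝ) ≤ N) ∧
    ((∑ i ∈ Finset.range (net.L + 1),
        (Nat.card {p : Fin (net.width (i + 1)) × Fin (net.width i) // net.W i p.1 p.2 ≠ 0}
          : ℝ≥0∞)) +
      ∑ i ∈ Finset.range net.L,
        (Nat.card {j : Fin (net.width (i + 1)) // net.v (i + 1) j ≠ 0} : ℝ≥0∞)) ≤ S ∧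
    (∀ i ≤ net.L, ∀ j k, |net.W i j k| ≤ B) ∧
    (∀ i, 1 ≤ i → i ≤ net.L → ∀ j, |net.v i j| ≤ B) ∧
    ∀ x ∈ cube d, ENNReal.ofReal |f x| ≤ Fb}

/-! ## Kullback–Leibler divergence -/

open Classical in
/-- The Kullback–Leibler divergence. -/
def KL {X : Type*} [MeasurableSpace X] (P Q : Measure X) : ℝ≥0∞ :=
  if P ≪ Q ∧ Integrable (fun x => Real.log (P.rnDeriv Q x).toReal) P then
    ENNReal.ofReal (∫ x, Real.log (P.rnDeriv Q x).toReal ∂P)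
  else ∞

/-- The exponent `e / (dstar/(s+1) + (1 + 1/(s+1))·e)` of the minimax rate, for noise
exponent `s ∈ [0,∞]` (equal to `1` when `s = ∞`). -/
def rateExp (dstar : ℕ) (e : ℝ) (s : ℝ≥0∞) : ℝ :=
  if s = ∞ then 1
  else e / ((dstar : ℝ) / (s.toReal + 1) + (1 + 1 / (s.toReal + 1)) * e)

/-! ## The cube -/

theorem isOpen_cubeo (m : ℕ) : IsOpen (cubeo m) :=
  isOpen_set_pi Set.finite_univ fun _ _ => isOpen_Ioo

theorem convex_cubeo (m : ℕ) : Convex ℝ (cubeo m) :=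
  convex_pi fun _ _ => convex_Ioo 0 1

theorem isClosed_cube (m : ℕ) : IsClosed (cube m) :=
  isClosed_set_pi fun _ _ => isClosed_Icc

theorem cubeo_subset_cube (m : ℕ) : cubeo m ⊆ cube m :=
  Set.pi_mono fun _ _ => Ioo_subset_Icc_self

theorem closure_cubeo (m : ℕ) : closure (cubeo m) = cube m := by
  simp [cubeo, cube, closure_pi_set]

theorem norm_sub_le_one_of_mem_cube {m : ℕ} {x z : Fin m → ℝ} (hx : x ∈ cube m)
    (hz : z ∈ cube m) : ‖x - z‖ ≤ 1 := by
  refine (pi_norm_le_iff_of_nonneg zero_le_one).2 fun i => ?_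
  have h₁ := hx i (mem_univ i)
  have h₂ := hz i (mem_univ i)
  rw [Pi.sub_apply, Real.norm_eq_abs, abs_le]
  constructor <;> linarith [h₁.1, h₁.2, h₂.1, h₂.2]

theorem e2_le {m : ℕ} (x z : Fin m → ℝ) : e2 x z ≤ m * ‖x - z‖ := by
  refine Real.sqrt_le_iff.2 ⟨by positivity, ?_⟩
  calc ∑ i, (x i - z i) ^ 2 ≤ ∑ _i : Fin m, ‖x - z‖ ^ 2 := by
        refine Finset.sum_le_sum fun i _ => ?_
        rw [← sq_abs]
        exact pow_le_pow_left₀ (abs_nonneg _) (norm_le_pi_norm (x - z) i) 2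
    _ = m * ‖x - z‖ ^ 2 := by simp
    _ ≤ (m * ‖x - z‖) ^ 2 := by
        rw [mul_pow]
        refine mul_le_mul_of_nonneg_right ?_ (by positivity)
        exact_mod_cast Nat.le_self_pow two_ne_zero m

theorem e2_pos {m : ℕ} {x z : Fin m → ℝ} (h : x ≠ z) : 0 < e2 x z := by
  obtain ⟨i, hi⟩ := Function.ne_iff.1 h
  refine Real.sqrt_pos.2 (Finset.sum_pos' (fun _ _ => sq_nonneg _) ⟨i, Finset.mem_univ i, ?_⟩)
  have := sub_ne_zero.2 hi
  positivity

/-! ## Iterated partial derivatives -/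

theorem pderivList_append {m : ℕ} (l l' : List (Fin m)) (f : (Fin m → ℝ) → ℝ) :
    pderivList (l ++ l') f = pderivList l' (pderivList l f) := by
  induction l generalizing f with
  | nil => rfl
  | cons i l ih => exact ih _

theorem pderivList_congr {m : ℕ} {S : Set (Fin m → ℝ)} (hS : IsOpen S) (l : List (Fin m))
    {f g : (Fin m → ℝ) → ℝ} (h : EqOn f g S) : EqOn (pderivList l f) (pderivList l g) S := by
  induction l generalizing f g with
  | nil => exact h
  | cons i l ih =>
    refine ih fun x hx => ?_
    have : f =ᶠ[nhds x] g := Filter.eventuallyEq_of_mem (hS.mem_nhds hx) h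
    simp only [this.fderiv_eq]

theorem contDiffOn_partial {m k : ℕ} {S : Set (Fin m → ℝ)} (hS : IsOpen S)
    {f : (Fin m → ℝ) → ℝ} (hf : ContDiffOn ℝ ((k + 1 : ℕ) : ℕ∞) f S) (v : Fin m → ℝ) :
    ContDiffOn ℝ (k : ℕ∞) (fun x => fderiv ℝ f x v) S :=
  (hf.fderiv_of_isOpen hS (m := (k : ℕ∞)) (by norm_cast)).clm_apply contDiffOn_const

theorem contDiffOn_pderivList {m k : ℕ} {S : Set (Fin m → ℝ)} (hS : IsOpen S)
    (l : List (Fin m)) {f : (Fin m → ℝ) → ℝ}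
    (hf : ContDiffOn ℝ ((k + l.length : ℕ) : ℕ∞) f S) :
    ContDiffOn ℝ (k : ℕ∞) (pderivList l f) S := by
  induction l generalizing f with
  | nil => exact hf
  | cons i l ih => exact ih (contDiffOn_partial hS hf _)

theorem partial_comm {m : ℕ} {S : Set (Fin m → ℝ)} (hS : IsOpen S)
    {f : (Fin m → ℝ) → ℝ} (hf : ContDiffOn ℝ 2 f S) (v w : Fin m → ℝ) :
    EqOn (fun x => fderiv ℝ (fun y => fderiv ℝ f y v) x w)
      (fun x => fderiv ℝ (fun y => fderiv ℝ f y w) x v) S := by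
  intro x hx
  have hx' : ContDiffAt ℝ 2 f x := hf.contDiffAt (hS.mem_nhds hx)
  have hsymm : IsSymmSndFDerivAt ℝ f x := hx'.isSymmSndFDerivAt (by simp)
  have hd : DifferentiableAt ℝ (fderiv ℝ f) x :=
    (hx'.fderiv_right (m := 1) (by norm_num)).differentiableAt (by simp)
  have key : ∀ u u' : Fin m → ℝ,
      fderiv ℝ (fun y => fderiv ℝ f y u) x u' = fderiv ℝ (fderiv ℝ f) x u' u := by
    intro u u'
    rw [fderiv_clm_apply hd (differentiableAt_const u)]
    simp
  simp only [key]
  exact hsymm.eq w v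

theorem pderivList_perm {m : ℕ} {S : Set (Fin m → ℝ)} (hS : IsOpen S)
    {l l' : List (Fin m)} (h : l.Perm l') {f : (Fin m → ℝ) → ℝ}
    (hf : ContDiffOn ℝ (l.length : ℕ∞) f S) :
    EqOn (pderivList l f) (pderivList l' f) S := by
  induction h generalizing f with
  | nil => exact fun _ _ => rfl
  | cons i _ ih => exact ih (contDiffOn_partial hS hf _)
  | swap i j l =>
    refine pderivList_congr hS l (partial_comm hS (hf.of_le ?_) _ _)
    have : 2 ≤ (j :: i :: l).length := by simp
    exact WithTop.coe_le_coe.2 (show (2 : ℕ∞) ≤ _ by exact_mod_cast this)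
  | trans h₁ _ ih₁ ih₂ =>
    exact (ih₁ hf).trans (ih₂ (by rwa [← h₁.length_eq]))

theorem count_idxList {m : ℕ} (u : Fin m → ℕ) (i : Fin m) : (idxList u).count i = u i := by
  rw [idxList, List.count_flatMap]
  have : (List.count i ∘ fun j => List.replicate (u j) j) = fun j => if j = i then u j else 0 := by
    funext j
    simp [List.count_replicate]
  rw [this, ← List.ofFn_eq_map, List.sum_ofFn]
  simp

theorem mord_count {m : ℕ} (l : List (Fin m)) : mord (fun i => l.count i) = l.length := by
  simpa [mord] using
    Multiset.sum_count_eq_card (s := Finset.univ) (m := (l : Multiset (Fin m))) (by simp)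

theorem pderivList_eq_Dm {m : ℕ} {S : Set (Fin m → ℝ)} (hS : IsOpen S) (l : List (Fin m))
    {f : (Fin m → ℝ) → ℝ} (hf : ContDiffOn ℝ (l.length : ℕ∞) f S) :
    EqOn (pderivList l f) (Dm (fun i => l.count i) f) S :=
  pderivList_perm hS (List.perm_iff_count.2 fun i => (count_idxList (fun i => l.count i) i).symm) hf

/-! ## Hölder balls in terms of jets -/

/-- Smoothness of order `k + γ` on the open cube, with Hölder constant `R`, for a family of
functions indexed by lists of directions that behaves like the family of partial derivatives. -/
structure IsJet {d : ℕ} (k : ℕ) (γ R : ℝ) (F : List (Fin d) → (Fin d → ℝ) → ℝ) : Prop where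
  diff : ∀ l : List (Fin d), l.length < k → ∀ x ∈ cubeo d, DifferentiableAt ℝ (F l) x
  deriv : ∀ l : List (Fin d), l.length < k → ∀ x ∈ cubeo d, ∀ i,
    fderiv ℝ (F l) x (Pi.single i 1) = F (l ++ [i]) x
  holder : ∀ l : List (Fin d), l.length = k → ∀ x ∈ cubeo d, ∀ z ∈ cubeo d,
    |F l x - F l z| ≤ R * ‖x - z‖ ^ γ

theorem IsJet.sub {d k : ℕ} {γ R R' : ℝ} {F G : List (Fin d) → (Fin d → ℝ) → ℝ}
    (hF : IsJet k γ R F) (hG : IsJet k γ R' G) :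
    IsJet k γ (R + R') fun l x => F l x - G l x where
  diff l hl x hx := (hF.diff l hl x hx).sub (hG.diff l hl x hx)
  deriv l hl x hx i := by
    rw [fderiv_fun_sub (hF.diff l hl x hx) (hG.diff l hl x hx)]
    simp [hF.deriv l hl x hx i, hG.deriv l hl x hx i]
  holder l hl x hx z hz := by
    have h₁ := abs_le.1 (hF.holder l hl x hx z hz)
    have h₂ := abs_le.1 (hG.holder l hl x hx z hz)
    rw [add_mul, abs_le]
    constructor <;> linarith [h₁.1, h₁.2, h₂.1, h₂.2]

theorem opNorm_le_sum_abs {d : ℕ} (L : (Fin d → ℝ) →L[ℝ] ℝ) :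
    ‖L‖ ≤ ∑ i, |L (Pi.single i 1)| := by
  refine L.opNorm_le_bound (Finset.sum_nonneg fun _ _ => abs_nonneg _) fun x => ?_
  have hx : L x = ∑ i, x i * L (Pi.single i 1) := by
    conv_lhs => rw [pi_eq_sum_univ' x]
    simp [map_sum]
  rw [hx, Finset.sum_mul]
  refine (norm_sum_le _ _).trans (Finset.sum_le_sum fun i _ => ?_)
  rw [norm_mul, mul_comm, Real.norm_eq_abs (L _)]
  exact mul_le_mul_of_nonneg_left (norm_le_pi_norm x i) (abs_nonneg _)

/-- Mean value bound on a convex piece of the open cube. -/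
theorem IsJet.abs_sub_le {d k : ℕ} {γ R : ℝ} {F : List (Fin d) → (Fin d → ℝ) → ℝ}
    (hF : IsJet k γ R F) {T : Set (Fin d → ℝ)} (hT : Convex ℝ T) (hTS : T ⊆ cubeo d)
    {l : List (Fin d)} (hl : l.length < k) {B : ℝ} (hB : ∀ i, ∀ x ∈ T, |F (l ++ [i]) x| ≤ B)
    {x z : Fin d → ℝ} (hx : x ∈ T) (hz : z ∈ T) : |F l x - F l z| ≤ d * B * ‖x - z‖ := by
  have := hT.norm_image_sub_le_of_norm_fderiv_le (𝕜 := ℝ) (f := F l) (C := d * B)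
    (fun y hy => hF.diff l hl y (hTS hy)) (fun y hy => ?_) hz hx
  · exact this
  · refine (opNorm_le_sum_abs _).trans ?_
    calc ∑ i, |fderiv ℝ (F l) y (Pi.single i 1)| ≤ ∑ _i : Fin d, B :=
          Finset.sum_le_sum fun i _ => by
            rw [hF.deriv l hl y (hTS hy) i]
            exact hB i y hy
      _ = d * B := by simp

/-- The constant relating jets at a point to jets nearby. -/
def jetConst (d : ℕ) (R : ℝ) : ℕ → ℝ
  | 0 => 1 + R
  | j + 1 => 1 + jetConst d R j + d * jetConst d R j

theorem jetConst_nonneg (d : ℕ) {R : ℝ} (hR : 0 ≤ R) (j : ℕ) : 0 ≤ jetConst d R j := by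
  induction j with
  | zero => simp only [jetConst]; linarith
  | succ j ih => simp only [jetConst]; positivity

theorem jetConst_mono (d : ℕ) {R : ℝ} (hR : 0 ≤ R) : Monotone (jetConst d R) := by
  refine monotone_nat_of_le_succ fun j => ?_
  have := jetConst_nonneg d hR j
  simp only [jetConst]
  nlinarith [mul_nonneg (Nat.cast_nonneg (α := ℝ) d) this]

theorem IsJet.abs_le_of_abs_le {d k : ℕ} {γ R : ℝ} (hγ : 0 < γ) (hR : 0 ≤ R)
    {F : List (Fin d) → (Fin d → ℝ) → ℝ} (hF : IsJet k γ R F) {p : Fin d → ℝ}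
    (hp : p ∈ cubeo d) {h : ℝ} (hh : 0 < h)
    (hFp : ∀ l : List (Fin d), l.length ≤ k → |F l p| ≤ h ^ (k + γ - l.length))
    (j : ℕ) (l : List (Fin d)) (hl : l.length + j = k) {x : Fin d → ℝ} (hx : x ∈ cubeo d)
    (hxp : ‖x - p‖ ≤ h) : |F l x| ≤ jetConst d R j * h ^ (k + γ - l.length) := by
  induction j generalizing l x with
  | zero =>
    have hlk : l.length = k := by omega
    have h₁ := hFp l hlk.le
    have h₂ := hF.holder l hlk x hx p hp
    have h₃ : ‖x - p‖ ^ γ ≤ h ^ γ := Real.rpow_le_rpow (norm_nonneg _) hxp hγ.le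
    have h₄ : (k : ℝ) + γ - l.length = γ := by rw [hlk]; ring
    rw [h₄] at h₁ ⊢
    calc |F l x| ≤ |F l p| + |F l x - F l p| := by
          have := abs_add_le (F l p) (F l x - F l p)
          simpa using this
      _ ≤ h ^ γ + R * h ^ γ := add_le_add h₁ (h₂.trans (mul_le_mul_of_nonneg_left h₃ hR))
      _ = jetConst d R 0 * h ^ γ := by simp only [jetConst]; ring
  | succ j ih =>
    have hlk : l.length < k := by omega
    have hJ := jetConst_nonneg d hR j
    have h₁ := hFp l hlk.le
    have hT : Convex ℝ (cubeo d ∩ Metric.closedBall p h) :=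
      (convex_cubeo d).inter (convex_closedBall p h)
    have h₂ := hF.abs_sub_le hT inter_subset_left hlk
      (B := jetConst d R j * h ^ (k + γ - (l.length + 1)))
      (fun i y hy => by
        have := ih (l ++ [i]) (by simp; omega) hy.1 (by simpa [dist_eq_norm] using hy.2)
        simpa using this)
      ⟨hx, by simpa [dist_eq_norm] using hxp⟩ ⟨hp, by simp [hh.le]⟩
    have hpow : h ^ ((k : ℝ) + γ - (l.length + 1)) * h = h ^ ((k : ℝ) + γ - l.length) := by
      nth_rewrite 2 [← Real.rpow_one h]
      rw [← Real.rpow_add hh]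
      congr 1
      ring
    calc |F l x| ≤ |F l p| + |F l x - F l p| := by
          have := abs_add_le (F l p) (F l x - F l p)
          simpa using this
      _ ≤ h ^ (k + γ - l.length)
          + d * (jetConst d R j * h ^ (k + γ - (l.length + 1))) * h := by
          refine add_le_add h₁ (h₂.trans (mul_le_mul_of_nonneg_left hxp ?_))
          positivity
      _ = (1 + d * jetConst d R j) * h ^ ((k : ℝ) + γ - l.length) := by
          rw [add_mul, one_mul, ← hpow]
          ring
      _ ≤ jetConst d R (j + 1) * h ^ ((k : ℝ) + γ - l.length) := by
          refine mul_le_mul_of_nonneg_right ?_ (by positivity)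
          simp only [jetConst]
          linarith

theorem cast_smoothOrder {β : ℝ} (hβ : 0 < β) : (smoothOrder β : ℝ) = ⌈β⌉ - 1 := by
  have h₁ : 0 < ⌈β⌉ := Int.ceil_pos.2 hβ
  have h₂ : ((smoothOrder β : ℕ) : ℤ) = ⌈β⌉ - 1 := by
    rw [smoothOrder, ← Int.ceil_toNat, Int.ceil_sub_one, Int.toNat_of_nonneg (by omega)]
  exact_mod_cast congrArg (Int.cast (R := ℝ)) h₂

theorem smoothOrder_lt {β : ℝ} (hβ : 0 < β) : (smoothOrder β : ℝ) < β := by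
  rw [cast_smoothOrder hβ]
  linarith [Int.ceil_lt_add_one β]

theorem le_smoothOrder_add_one {β : ℝ} (hβ : 0 < β) : β ≤ smoothOrder β + 1 := by
  rw [cast_smoothOrder hβ]
  linarith [Int.le_ceil β]

theorem HolderBall.abs_pderivList_le {d : ℕ} {β r : ℝ} (hβ : 0 < β) (hr : 0 < r)
    {f : (Fin d → ℝ) → ℝ} (hf : f ∈ HolderBall d β r) {l : List (Fin d)}
    (hl : l.length ≤ smoothOrder β) {x : Fin d → ℝ} (hx : x ∈ cubeo d) :
    |pderivList l f x| ≤ r := by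
  obtain ⟨-, hcd, -, hnorm⟩ := hf
  rw [pderivList_eq_Dm (isOpen_cubeo d) l (hcd.of_le (by exact_mod_cast hl)) hx]
  have hm : (mord (fun i => l.count i) : ℝ) < β := by
    rw [mord_count]
    exact lt_of_le_of_lt (by exact_mod_cast hl) (smoothOrder_lt hβ)
  have h₁ := (le_add_right le_rfl).trans hnorm
  simp only [iSup_le_iff] at h₁
  exact (ENNReal.ofReal_le_ofReal_iff hr.le).1 (h₁ _ hm x hx)

theorem HolderBall.isJet {d : ℕ} (hd : 0 < d) {β r : ℝ} (hβ : 0 < β) (hr : 0 < r)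
    {f : (Fin d → ℝ) → ℝ} (hf : f ∈ HolderBall d β r) :
    IsJet (smoothOrder β) (β - smoothOrder β) (r * d) fun l => pderivList l f := by
  obtain ⟨-, hcd, -, hnorm⟩ := hf
  refine ⟨fun l hl x hx => ?_, fun l hl x hx i => ?_, fun l hl x hx z hz => ?_⟩
  · have : ContDiffOn ℝ ((1 + l.length : ℕ) : ℕ∞) f (cubeo d) :=
      hcd.of_le (by exact_mod_cast (by omega : 1 + l.length ≤ smoothOrder β))
    have h₂ := contDiffOn_pderivList (isOpen_cubeo d) l this
    exact (h₂.contDiffAt ((isOpen_cubeo d).mem_nhds hx)).differentiableAt (by simp)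
  · rw [pderivList_append]
    rfl
  · have hc : ContDiffOn ℝ (l.length : ℕ∞) f (cubeo d) := by rwa [hl]
    have hγ : β + 1 - (⌈β⌉ : ℝ) = β - smoothOrder β := by rw [cast_smoothOrder hβ]; ring
    have hγ0 : 0 < β - smoothOrder β := by linarith [smoothOrder_lt hβ]
    have hγ1 : β - smoothOrder β ≤ 1 := by linarith [le_smoothOrder_add_one hβ]
    rw [pderivList_eq_Dm (isOpen_cubeo d) l hc hx, pderivList_eq_Dm (isOpen_cubeo d) l hc hz]
    rcases eq_or_ne x z with rfl | hxz
    · simp only [sub_self, abs_zero]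
      positivity
    have hm : (⌈β⌉ : ℝ) - 1 ≤ (mord (fun i => l.count i) : ℝ) ∧
        (mord (fun i => l.count i) : ℝ) < β := by
      rw [mord_count, hl, ← cast_smoothOrder hβ]
      exact ⟨le_rfl, smoothOrder_lt hβ⟩
    have h₁ := (le_add_left le_rfl).trans hnorm
    simp only [iSup_le_iff] at h₁
    have h₂ := h₁ _ hm x hx z hz hxz
    have he := e2_pos hxz
    rw [hγ, ENNReal.ofReal_rpow_of_pos he, ← ENNReal.ofReal_div_of_pos (by positivity),
      ENNReal.ofReal_le_ofReal_iff hr.le, div_le_iff₀ (by positivity)] at h₂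
    refine h₂.trans ?_
    rw [mul_assoc]
    refine mul_le_mul_of_nonneg_left ?_ hr.le
    have hd1 : (1 : ℝ) ≤ d := by exact_mod_cast hd
    calc e2 x z ^ (β - smoothOrder β) ≤ (d * ‖x - z‖) ^ (β - smoothOrder β) :=
          Real.rpow_le_rpow he.le (e2_le x z) hγ0.le
      _ = (d : ℝ) ^ (β - smoothOrder β) * ‖x - z‖ ^ (β - smoothOrder β) :=
          Real.mul_rpow (by positivity) (norm_nonneg _)
      _ ≤ d * ‖x - z‖ ^ (β - smoothOrder β) := by
          refine mul_le_mul_of_nonneg_right ?_ (by positivity)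
          calc (d : ℝ) ^ (β - smoothOrder β) ≤ (d : ℝ) ^ (1 : ℝ) :=
                Real.rpow_le_rpow_of_exponent_le hd1 hγ1
            _ = d := Real.rpow_one _

/-! ## Metric entropy of Hölder balls -/

/-- Centres of the dyadic cells of side length `2⁻ʲ`. -/
def gridPoint {d : ℕ} (j : ℕ) (c : Fin d → Fin (2 ^ j)) : Fin d → ℝ :=
  fun i => ((c i : ℝ) + 1 / 2) * (1 / 2) ^ j

theorem gridPoint_mem {d j : ℕ} (c : Fin d → Fin (2 ^ j)) : gridPoint j c ∈ cubeo d := by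
  intro i _
  have h₁ : ((c i : ℕ) : ℝ) + 1 ≤ 2 ^ j := by exact_mod_cast (c i).2
  have h₂ : (0 : ℝ) < (1 / 2) ^ j := by positivity
  have h₃ : (2 : ℝ) ^ j * (1 / 2) ^ j = 1 := by rw [← mul_pow]; norm_num
  simp only [gridPoint]
  constructor
  · positivity
  · nlinarith

theorem exists_gridPoint_near {d : ℕ} (j : ℕ) {x : Fin d → ℝ} (hx : x ∈ cubeo d) :
    ∃ c : Fin d → Fin (2 ^ j), ‖x - gridPoint j c‖ ≤ (1 / 2) ^ j := by
  have h₂ : (0 : ℝ) < (1 / 2) ^ j := by positivity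
  have h₃ : (2 : ℝ) ^ j * (1 / 2) ^ j = 1 := by rw [← mul_pow]; norm_num
  have hlt : ∀ i, ⌊x i * 2 ^ j⌋₊ < 2 ^ j := fun i => by
    have hi := hx i (mem_univ i)
    have h2j : (0 : ℝ) < 2 ^ j := by positivity
    refine (Nat.floor_lt (mul_nonneg hi.1.le h2j.le)).2 ?_
    push_cast
    nlinarith [hi.2]
  refine ⟨fun i => ⟨⌊x i * 2 ^ j⌋₊, hlt i⟩, (pi_norm_le_iff_of_nonneg h₂.le).2 fun i => ?_⟩
  have hi := hx i (mem_univ i)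
  have hf₁ := Nat.floor_le (mul_nonneg hi.1.le (by positivity : (0 : ℝ) ≤ 2 ^ j))
  have hf₂ := Nat.lt_floor_add_one (x i * 2 ^ j)
  have hxi : x i = x i * 2 ^ j * (1 / 2) ^ j := by rw [mul_assoc, h₃, mul_one]
  simp only [Pi.sub_apply, gridPoint, Real.norm_eq_abs]
  rw [hxi, ← sub_mul, abs_mul, abs_of_pos h₂]
  refine mul_le_of_le_one_left h₂.le ?_
  rw [← hxi, abs_le]
  constructor <;> linarith

theorem abs_floor_sub_floor_le {a b B : ℝ} (h : |a - b| ≤ B) :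
    |((⌊a⌋ - ⌊b⌋ : ℤ) : ℝ)| ≤ B + 1 := by
  have h₁ := abs_le.1 h
  push_cast
  rw [abs_le]
  constructor <;>
    linarith [Int.floor_le a, Int.lt_floor_add_one a, Int.floor_le b, Int.lt_floor_add_one b]

theorem abs_sub_lt_of_floor_eq {a b w : ℝ} (hw : 0 < w) (h : ⌊a / w⌋ = ⌊b / w⌋) :
    |a - b| ≤ w := by
  have := (Int.abs_sub_lt_one_of_floor_eq_floor h).le
  rw [← sub_div, abs_div, abs_of_pos hw, div_le_one hw] at this
  exact this

/-- Lists of directions of length at most `k`. -/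
abbrev ShortList (d k : ℕ) : Type := {l : List (Fin d) // l.length ≤ k}

instance (d k : ℕ) : Finite (ShortList d k) := (List.finite_length_le (Fin d) k).to_subtype

/-- A cover of a class of functions by finitely many pieces, on each of which all jets agree up
to the natural precision at scale `2⁻ʲ`. -/
theorem exists_jet_cover {d : ℕ} (hd : 0 < d) {β r : ℝ} (hβ : 0 < β) (hr : 0 < r) :
    ∃ M A : ℝ, 1 ≤ M ∧ 0 ≤ A ∧ ∀ j : ℕ,
      ∃ (ι : Type) (_ : Fintype ι) (U : ι → Set ((Fin d → ℝ) → ℝ)),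
        Real.log (Fintype.card ι) ≤ A * 2 ^ (j * d) ∧
        (∀ f ∈ HolderBall d β r, ∃ i, f ∈ U i) ∧
        (∀ i, U i ⊆ HolderBall d β r) ∧
        ∀ i, ∀ f ∈ U i, ∀ g ∈ U i, ∀ l : List (Fin d), l.length ≤ smoothOrder β →
          ∀ x ∈ cubeo d, |pderivList l f x - pderivList l g x| ≤
            M * ((1 / 2) ^ j) ^ (β - l.length) := by
  classical
  set k := smoothOrder β with hk
  have hkβ : (k : ℝ) < β := smoothOrder_lt hβ
  set R := r * d + r * d with hR
  have hR0 : 0 ≤ R := by positivity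
  set M := 1 + 2 * r + jetConst d R k with hM
  have hJ0 := jetConst_nonneg d hR0 k
  have hM1 : 1 ≤ M := by linarith
  obtain ⟨B, hB⟩ := exists_nat_ge (M * 2 ^ β + 1)
  let Λ := ShortList d k
  let _ : Fintype Λ := Fintype.ofFinite Λ
  let V := Finset.Icc (-(B : ℤ)) B
  have hVpos : 1 ≤ Fintype.card V := Fintype.card_pos_iff.2 ⟨⟨0, by simp [V]⟩⟩
  set a := Fintype.card Λ * Real.log (Fintype.card V) with ha
  have ha0 : 0 ≤ a := mul_nonneg (by positivity) (Real.log_natCast_nonneg _)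
  refine ⟨M, 2 * a, hM1, by positivity, fun j => ?_⟩
  induction j with
  | zero =>
    refine ⟨Unit, inferInstance, fun _ => HolderBall d β r, by simpa using ha0,
      fun f hf => ⟨(), hf⟩, fun _ => Subset.rfl, fun _ f hf g hg l hl x hx => ?_⟩
    have h₁ := abs_le.1 (HolderBall.abs_pderivList_le hβ hr hf hl hx)
    have h₂ := abs_le.1 (HolderBall.abs_pderivList_le hβ hr hg hl hx)
    simp only [pow_zero, Real.one_rpow, mul_one]
    rw [abs_le]
    constructor <;> linarith [h₁.1, h₁.2, h₂.1, h₂.2]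
  | succ j ih =>
    obtain ⟨ι, hι, U, hcard, hcov, hsub, hclose⟩ := ih
    set h : ℝ := (1 / 2) ^ (j + 1) with hh
    have hh0 : 0 < h := by positivity
    have hrep : ∀ i, ∃ g, (U i).Nonempty → g ∈ U i := fun i => by
      by_cases hU : (U i).Nonempty
      · exact ⟨hU.some, fun _ => hU.some_mem⟩
      · exact ⟨fun _ => 0, fun hc => absurd hc hU⟩
    choose rep hrep using hrep
    let G := Fin d → Fin (2 ^ (j + 1))
    let Fl : ((Fin d → ℝ) → ℝ) → G × Λ → ℤ := fun f p =>
      ⌊pderivList p.2.1 f (gridPoint (j + 1) p.1) / h ^ (β - p.2.1.length)⌋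
    refine ⟨ι × (G × Λ → V), inferInstance,
      fun i => {f | f ∈ U i.1 ∧ ∀ p, Fl f p = Fl (rep i.1) p + (i.2 p : ℤ)}, ?_, ?_, ?_, ?_⟩
    · rw [Fintype.card_prod, Fintype.card_fun, Fintype.card_prod, Fintype.card_fun,
        Fintype.card_fin, Fintype.card_fin]
      have hstep : Real.log ((Fintype.card ι * Fintype.card V ^ ((2 ^ (j + 1)) ^ d *
          Fintype.card Λ) : ℕ) : ℝ) ≤ Real.log (Fintype.card ι) + 2 ^ ((j + 1) * d) * a := by
        rcases Nat.eq_zero_or_pos (Fintype.card ι) with h0 | hpos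
        · simp only [h0, zero_mul, Nat.cast_zero, Real.log_zero, zero_add]
          positivity
        · have hV : (0 : ℝ) < Fintype.card V := by exact_mod_cast hVpos
          push_cast
          rw [Real.log_mul (by exact_mod_cast hpos.ne') (by positivity), Real.log_pow]
          push_cast
          rw [ha, ← pow_mul, mul_assoc]
      refine hstep.trans ?_
      have h2 : (2 : ℝ) * 2 ^ (j * d) ≤ 2 ^ ((j + 1) * d) := by
        rw [← pow_succ', add_mul, one_mul]
        exact pow_le_pow_right₀ one_le_two (by omega)
      nlinarith
    · intro f hf
      obtain ⟨i, hi⟩ := hcov f hf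
      have hri := hrep i ⟨f, hi⟩
      have hmem : ∀ p : G × Λ, Fl f p - Fl (rep i) p ∈ V := fun p => by
        have h₁ := hclose i f hi _ hri p.2.1 p.2.2 _ (gridPoint_mem p.1)
        have hw : 0 < h ^ (β - p.2.1.length) := by positivity
        have hl : (0 : ℝ) ≤ p.2.1.length := by positivity
        have h₂ : |pderivList p.2.1 f (gridPoint (j + 1) p.1) / h ^ (β - p.2.1.length) -
            pderivList p.2.1 (rep i) (gridPoint (j + 1) p.1) / h ^ (β - p.2.1.length)|
            ≤ M * 2 ^ β := by
          rw [← sub_div, abs_div, abs_of_pos hw, div_le_iff₀ hw]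
          refine h₁.trans ?_
          rw [mul_assoc]
          refine mul_le_mul_of_nonneg_left ?_ (by linarith)
          have hlk : (p.2.1.length : ℝ) ≤ k := by exact_mod_cast p.2.2
          have e₁ : ((1 / 2 : ℝ)) ^ j = 2 * h := by rw [hh, pow_succ]; ring
          rw [e₁, Real.mul_rpow (by norm_num) hh0.le]
          refine mul_le_mul_of_nonneg_right ?_ hw.le
          exact Real.rpow_le_rpow_of_exponent_le one_le_two (by linarith)
        have h₃ := (abs_floor_sub_floor_le h₂).trans hB
        have h₄ : |Fl f p - Fl (rep i) p| ≤ (B : ℤ) := by exact_mod_cast h₃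
        exact Finset.mem_Icc.2 (abs_le.1 h₄)
      exact ⟨(i, fun p => ⟨_, hmem p⟩), hi, fun p => by simp⟩
    · exact fun i f hf => hsub i.1 hf.1
    · rintro ⟨i, v⟩ f ⟨hfi, hf⟩ g ⟨hgi, hg⟩ l hl x hx
      have hjet := (HolderBall.isJet hd hβ hr (hsub i hfi)).sub
        (HolderBall.isJet hd hβ hr (hsub i hgi))
      obtain ⟨c, hc⟩ := exists_gridPoint_near (j + 1) hx
      have hβk : (k : ℝ) + (β - k) = β := by ring
      have := hjet.abs_le_of_abs_le (by linarith) hR0 (gridPoint_mem c) hh0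
        (fun l' hl' => by
          rw [← hk, hβk]
          refine abs_sub_lt_of_floor_eq (by positivity) ?_
          exact (hf (c, ⟨l', hl'⟩)).trans (hg (c, ⟨l', hl'⟩)).symm)
        (k - l.length) l (by omega) hx hc
      rw [← hk, hβk] at this
      refine this.trans (mul_le_mul_of_nonneg_right ?_ (by positivity))
      have := jetConst_mono d hR0 (Nat.sub_le k l.length)
      linarith

/-- `𝓕` has a finite `ε`-net of measurable functions, in the uniform norm on the cube, whose
cardinality has logarithm at most `L`. -/
def HasNet {m : ℕ} (𝓕 : Set ((Fin m → ℝ) → ℝ)) (ε L : ℝ) : Prop :=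
  ∃ (ι : Type) (_ : Fintype ι) (_ : Nonempty ι) (g : ι → (Fin m → ℝ) → ℝ),
    (∀ i, Measurable (g i)) ∧ Real.log (Fintype.card ι) ≤ L ∧
      ∀ f ∈ 𝓕, ∃ i, ∀ x ∈ cube m, |f x - g i x| ≤ ε

theorem HasNet.mono {m : ℕ} {𝓕 : Set ((Fin m → ℝ) → ℝ)} {ε ε' L L' : ℝ}
    (h : HasNet 𝓕 ε L) (hε : ε ≤ ε') (hL : L ≤ L') : HasNet 𝓕 ε' L' := by
  obtain ⟨ι, h₁, h₂, g, hg, hc, hf⟩ := h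
  refine ⟨ι, h₁, h₂, g, hg, hc.trans hL, fun f hff => ?_⟩
  obtain ⟨i, hi⟩ := hf f hff
  exact ⟨i, fun x hx => (hi x hx).trans hε⟩

theorem abs_sub_le_on_cube {m : ℕ} {f g : (Fin m → ℝ) → ℝ} (hf : ContinuousOn f (cube m))
    (hg : ContinuousOn g (cube m)) {ε : ℝ} (h : ∀ x ∈ cubeo m, |f x - g x| ≤ ε)
    {x : Fin m → ℝ} (hx : x ∈ cube m) : |f x - g x| ≤ ε := by
  have hx' : x ∈ closure (cubeo m) := by rwa [closure_cubeo]
  exact ContinuousWithinAt.closure_le (f := fun x => |f x - g x|) (g := fun _ => ε) hx'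
    (((hf x hx).sub (hg x hx)).abs.mono (cubeo_subset_cube m)) continuousWithinAt_const h

theorem HolderBall.hasNet {d : ℕ} (hd : 0 < d) {β r : ℝ} (hβ : 0 < β) (hr : 0 < r) :
    ∃ C : ℝ, 0 ≤ C ∧ ∀ ε : ℝ, 0 < ε → ε ≤ 1 →
      HasNet (HolderBall d β r) ε (C * ε ^ (-(d / β : ℝ))) := by
  classical
  obtain ⟨M, A, hM, hA, hcover⟩ := exists_jet_cover (d := d) hd hβ hr
  have hM0 : 0 < M := by linarith
  refine ⟨A * (2 ^ d * M ^ (d / β)), by positivity, fun ε hε hε1 => ?_⟩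
  set y := (ε / M) ^ (1 / β) with hy
  have hy0 : 0 < y := by positivity
  have hy1 : y ≤ 1 := Real.rpow_le_one (by positivity)
    ((div_le_one hM0).2 (hε1.trans hM)) (by positivity)
  obtain ⟨j, hj₁, hj₂⟩ := exists_nat_pow_near_of_lt_one hy0 hy1
    (by norm_num : (0 : ℝ) < 1 / 2) (by norm_num)
  obtain ⟨ι, hι, U, hcard, hcov, hsub, hclose⟩ := hcover (j + 1)
  have h2 : (2 : ℝ) ^ (j + 1) ≤ 2 * y⁻¹ := by
    have : (2 : ℝ) ^ j ≤ y⁻¹ := by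
      rw [le_inv_comm₀ (by positivity) hy0]
      simpa using hj₂
    rw [pow_succ']
    linarith
  have hbound : A * 2 ^ ((j + 1) * d) ≤ A * (2 ^ d * M ^ (d / β)) * ε ^ (-(d / β : ℝ)) := by
    rw [mul_assoc]
    refine mul_le_mul_of_nonneg_left ?_ hA
    calc (2 : ℝ) ^ ((j + 1) * d) = (2 ^ (j + 1)) ^ d := pow_mul _ _ _
      _ ≤ (2 * y⁻¹) ^ d := pow_le_pow_left₀ (by positivity) h2 d
      _ = 2 ^ d * M ^ (d / β) * ε ^ (-(d / β : ℝ)) := by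
          rw [mul_pow, mul_assoc]
          congr 1
          rw [inv_pow, hy, ← Real.rpow_natCast, ← Real.rpow_mul (by positivity),
            one_div_mul_eq_div, Real.div_rpow hε.le hM0.le, inv_div, Real.rpow_neg hε.le,
            div_eq_mul_inv]
  have hrep : ∀ i, ∃ g, Measurable g ∧ ∀ f ∈ U i, ∀ x ∈ cube d, |f x - g x| ≤ ε := by
    intro i
    rcases (U i).eq_empty_or_nonempty with hU | ⟨g, hg⟩
    · exact ⟨fun _ => 0, measurable_const, by simp [hU]⟩
    · have hgc := (hsub i hg).1
      refine ⟨(cube d).piecewise g fun _ => 0,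
        hgc.measurable_piecewise continuousOn_const (isClosed_cube d).measurableSet,
        fun f hf x hx => ?_⟩
      rw [piecewise_eq_of_mem _ _ _ hx]
      refine abs_sub_le_on_cube (hsub i hf).1 hgc (fun z hz => ?_) hx
      have := hclose i f hf g hg [] (Nat.zero_le _) z hz
      simp only [List.length_nil, Nat.cast_zero, sub_zero] at this
      refine this.trans ?_
      calc M * ((1 / 2) ^ (j + 1)) ^ β ≤ M * y ^ β :=
            mul_le_mul_of_nonneg_left (Real.rpow_le_rpow (by positivity) hj₁.le hβ.le) hM0.le
        _ = ε := by
            rw [hy, ← Real.rpow_mul (by positivity), one_div_mul_cancel hβ.ne', Real.rpow_one]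
            field_simp
  choose g hg hgU using hrep
  rcases isEmpty_or_nonempty ι with he | hne
  · refine ⟨Unit, inferInstance, inferInstance, fun _ _ => 0, fun _ => measurable_const, ?_, ?_⟩
    · simp only [Fintype.card_unit, Nat.cast_one, Real.log_one]
      positivity
    · intro f hf
      exact isEmptyElim (hcov f hf).choose
  · refine ⟨ι, hι, hne, g, hg, hcard.trans hbound, fun f hf => ?_⟩
    obtain ⟨i, hi⟩ := hcov f hf
    exact ⟨i, hgU i f hi⟩

/-! ## Hölder continuity and entropy of compositional classes -/

theorem mem_cube_comp {m k : ℕ} {x : Fin m → ℝ} (hx : x ∈ cube m) (e : Fin k → Fin m) :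
    (fun j => x (e j)) ∈ cube k :=
  fun j _ => hx (e j) (mem_univ _)

theorem HolderBall.abs_sub_le {d : ℕ} (hd : 0 < d) {β r : ℝ} (hβ : 0 < β) (hr : 0 < r)
    {f : (Fin d → ℝ) → ℝ} (hf : f ∈ HolderBall d β r) {x z : Fin d → ℝ}
    (hx : x ∈ cube d) (hz : z ∈ cube d) : |f x - f z| ≤ r * d * ‖x - z‖ ^ min 1 β := by
  have hb : 0 < min 1 β := by positivity
  have hjet := HolderBall.isJet hd hβ hr hf
  have hopen : ∀ x ∈ cubeo d, ∀ z ∈ cubeo d, |f x - f z| ≤ r * d * ‖x - z‖ ^ min 1 β := by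
    intro x hx z hz
    rcases Nat.eq_zero_or_pos (smoothOrder β) with h0 | hpos
    · have h₁ := hjet.holder [] h0.symm x hx z hz
      have h₂ : min 1 β = β - smoothOrder β := by
        have := le_smoothOrder_add_one hβ
        rw [h0] at this ⊢
        simp only [Nat.cast_zero, zero_add, sub_zero] at this ⊢
        exact min_eq_right this
      rw [h₂]
      exact h₁
    · have h₁ := hjet.abs_sub_le (convex_cubeo d) Subset.rfl (l := []) hpos (B := r)
        (fun i y hy => HolderBall.abs_pderivList_le hβ hr hf (by simpa using Nat.succ_le_of_lt hpos) hy) hx hz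
      have h₂ : min 1 β = 1 := by
        have h₃ : (1 : ℝ) ≤ smoothOrder β := by exact_mod_cast hpos
        exact min_eq_left (h₃.trans (smoothOrder_lt hβ).le)
      rw [h₂, Real.rpow_one, mul_comm r]
      exact h₁
  have hmem : (x, z) ∈ closure (cubeo d ×ˢ cubeo d) := by
    rw [closure_prod_eq, closure_cubeo]
    exact ⟨hx, hz⟩
  have hsub : cubeo d ×ˢ cubeo d ⊆ cube d ×ˢ cube d :=
    prod_mono (cubeo_subset_cube d) (cubeo_subset_cube d)
  have hc₁ : ContinuousOn (fun p : (Fin d → ℝ) × (Fin d → ℝ) => |f p.1 - f p.2|)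
      (cube d ×ˢ cube d) :=
    ((hf.1.comp continuousOn_fst fun p hp => hp.1).sub
      (hf.1.comp continuousOn_snd fun p hp => hp.2)).abs
  have hc₂ : Continuous (fun p : (Fin d → ℝ) × (Fin d → ℝ) =>
      r * d * ‖p.1 - p.2‖ ^ min 1 β) :=
    continuous_const.mul
      ((continuous_fst.sub continuous_snd).norm.rpow_const fun _ => Or.inr hb.le)
  exact ContinuousWithinAt.closure_le hmem ((hc₁ (x, z) ⟨hx, hz⟩).mono hsub)
    hc₂.continuousWithinAt fun p hp => hopen p.1 hp.1 p.2 hp.2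

theorem abs_sup'_sub_sup'_le {m : ℕ} (I : Finset (Fin m)) (hI : I.Nonempty) (x z : Fin m → ℝ) :
    |(I.sup' hI fun i => x i) - I.sup' hI fun i => z i| ≤ ‖x - z‖ := by
  have key : ∀ x z : Fin m → ℝ,
      (I.sup' hI fun i => x i) ≤ (I.sup' hI fun i => z i) + ‖x - z‖ := by
    intro x z
    refine Finset.sup'_le hI _ fun i hi => ?_
    have h₁ : z i ≤ I.sup' hI fun i => z i := Finset.le_sup' (fun i => z i) hi
    have h₂ : x i - z i ≤ ‖x - z‖ := (le_abs_self _).trans (norm_le_pi_norm (x - z) i)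
    linarith
  have h₁ := key x z
  have h₂ := key z x
  rw [norm_sub_rev] at h₂
  rw [abs_le]
  constructor <;> linarith

theorem abs_sub_le_of_mem_GH_union_GM {m dstar dmax : ℕ} (hd : 0 < dstar) {β r : ℝ}
    (hβ : 0 < β) (hr : 0 < r) {f : (Fin m → ℝ) → ℝ} (hf : f ∈ GH m dstar β r ∪ GM m dmax)
    {x z : Fin m → ℝ} (hx : x ∈ cube m) (hz : z ∈ cube m) :
    |f x - f z| ≤ (1 + r * dstar) * ‖x - z‖ ^ min 1 β := by
  have hb : 0 < min 1 β := by positivity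
  have hpow : 0 ≤ ‖x - z‖ ^ min 1 β := by positivity
  rcases hf with ⟨e, g, -, hg, hfg⟩ | ⟨I, hI, -, hfI⟩
  · rw [hfg x hx, hfg z hz]
    refine (HolderBall.abs_sub_le hd hβ hr hg (mem_cube_comp hx e) (mem_cube_comp hz e)).trans ?_
    have h₁ : ‖(fun j => x (e j)) - fun j => z (e j)‖ ≤ ‖x - z‖ :=
      (pi_norm_le_iff_of_nonneg (norm_nonneg _)).2 fun j => norm_le_pi_norm (x - z) (e j)
    have h₂ := Real.rpow_le_rpow (norm_nonneg _) h₁ hb.le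
    have h₃ : 0 ≤ r * dstar := by positivity
    nlinarith
  · rw [hfI x hx, hfI z hz]
    refine (abs_sup'_sub_sup'_le I hI x z).trans ?_
    have h₁ : ‖x - z‖ ≤ ‖x - z‖ ^ min 1 β := by
      rcases (norm_nonneg (x - z)).eq_or_lt with h0 | h0
      · rw [← h0]
        positivity
      · simpa using Real.rpow_le_rpow_of_exponent_ge h0 (norm_sub_le_one_of_mem_cube hx hz)
          (min_le_left 1 β)
    have h₃ : 0 ≤ r * dstar := by positivity
    nlinarith

theorem GCHOM.exists_abs_sub_le (K dmax : ℕ) {dstar : ℕ} (hd : 0 < dstar) {β r : ℝ}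
    (hβ : 0 < β) (hr : 0 < r) (q : ℕ) :
    ∃ C : ℝ, 0 ≤ C ∧ ∀ (m : ℕ), ∀ f ∈ GCHOM K dmax dstar β r q m, ∀ x ∈ cube m, ∀ z ∈ cube m,
      |f x - f z| ≤ C * ‖x - z‖ ^ (min 1 β) ^ (q + 1) := by
  have hb : 0 < min 1 β := by positivity
  induction q with
  | zero =>
    refine ⟨1 + r * dstar, by positivity, ?_⟩
    rintro m f ⟨h, hh, hfh⟩ x hx z hz
    rw [hfh x hx, hfh z hz, zero_add, pow_one]
    exact abs_sub_le_of_mem_GH_union_GM hd hβ hr hh hx hz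
  | succ q ih =>
    obtain ⟨C, hC, ih⟩ := ih
    refine ⟨C * (1 + r * dstar) ^ (min 1 β) ^ (q + 1), by positivity, ?_⟩
    rintro m f ⟨H, g, hH, hHc, hg, hfg⟩ x hx z hz
    rw [hfg x hx, hfg z hz]
    refine (ih K g hg _ (hHc x hx) _ (hHc z hz)).trans ?_
    rw [mul_assoc]
    refine mul_le_mul_of_nonneg_left ?_ hC
    have h₁ : ‖H x - H z‖ ≤ (1 + r * dstar) * ‖x - z‖ ^ min 1 β :=
      (pi_norm_le_iff_of_nonneg (by positivity)).2 fun j =>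
        abs_sub_le_of_mem_GH_union_GM hd hβ hr (hH j) hx hz
    refine (Real.rpow_le_rpow (norm_nonneg _) h₁ (by positivity)).trans_eq ?_
    rw [Real.mul_rpow (by positivity) (by positivity), ← Real.rpow_mul (norm_nonneg _),
      ← pow_succ']

theorem one_le_rpow_neg {ε ρ : ℝ} (hε : 0 < ε) (hε1 : ε ≤ 1) (hρ : 0 ≤ ρ) : 1 ≤ ε ^ (-ρ) :=
  Real.one_le_rpow_of_pos_of_le_one_of_nonpos hε hε1 (by linarith)

theorem hasNet_GH_union_GM (m dmax : ℕ) {dstar : ℕ} (hd : 0 < dstar) {β r : ℝ}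
    (hβ : 0 < β) (hr : 0 < r) :
    ∃ C : ℝ, 0 ≤ C ∧ ∀ ε : ℝ, 0 < ε → ε ≤ 1 →
      HasNet (GH m dstar β r ∪ GM m dmax) ε (C * ε ^ (-(dstar / β : ℝ))) := by
  classical
  obtain ⟨C, hC, hnet⟩ := HolderBall.hasNet hd hβ hr
  set a : ℕ := m ^ dstar + 2 ^ m with ha
  have ha1 : 1 ≤ a := le_add_left Nat.one_le_two_pow
  refine ⟨C + Real.log a, add_nonneg hC (Real.log_natCast_nonneg _), fun ε hε hε1 => ?_⟩
  obtain ⟨ι, hι, hne, g, hg, hcard, hcov⟩ := hnet ε hε hε1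
  refine ⟨((Fin dstar → Fin m) × ι) ⊕ Finset (Fin m), inferInstance, inferInstance,
    Sum.elim (fun p x => g p.2 fun j => x (p.1 j))
      (fun I x => if hI : I.Nonempty then I.sup' hI fun i => x i else 0), ?_, ?_, ?_⟩
  · rintro (⟨e, i⟩ | I)
    · exact (hg i).comp (measurable_pi_lambda _ fun j => measurable_pi_apply (e j))
    · by_cases hI : I.Nonempty
      · simp only [Sum.elim_inr, hI, dite_true]
        exact (Continuous.finset_sup'_apply hI fun i _ => continuous_apply i).measurable
      · simp only [Sum.elim_inr, hI, dite_false]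
        exact measurable_const
  · have hι1 : 1 ≤ Fintype.card ι := Fintype.card_pos
    have h₁ : Fintype.card (((Fin dstar → Fin m) × ι) ⊕ Finset (Fin m)) ≤ a * Fintype.card ι := by
      simp only [Fintype.card_sum, Fintype.card_prod, Fintype.card_fun, Fintype.card_fin,
        Fintype.card_finset, ha]
      rw [add_mul]
      exact Nat.add_le_add_left (Nat.le_mul_of_pos_right _ hι1) _
    have h₂ : Real.log (Fintype.card (((Fin dstar → Fin m) × ι) ⊕ Finset (Fin m))) ≤
        Real.log a + Real.log (Fintype.card ι) := by
      rw [← Real.log_mul (by positivity) (by positivity)]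
      refine Real.log_le_log (by exact_mod_cast Fintype.card_pos) ?_
      exact_mod_cast h₁
    refine h₂.trans ?_
    have h₃ := one_le_rpow_neg hε hε1 (by positivity : 0 ≤ (dstar / β : ℝ))
    nlinarith [Real.log_natCast_nonneg a]
  · rintro f (⟨e, h, -, hh, hfh⟩ | ⟨I, hI, -, hfI⟩)
    · obtain ⟨i, hi⟩ := hcov h hh
      refine ⟨Sum.inl (e, i), fun x hx => ?_⟩
      rw [hfh x hx]
      exact hi _ (mem_cube_comp hx e)
    · refine ⟨Sum.inr I, fun x hx => ?_⟩
      simp [hfI x hx, hI, hε.le]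

/-- Truncation to the unit interval. -/
def clamp (t : ℝ) : ℝ := max 0 (min 1 t)

theorem clamp_mem (t : ℝ) : clamp t ∈ Icc (0 : ℝ) 1 :=
  ⟨le_max_left _ _, max_le zero_le_one (min_le_left _ _)⟩

theorem measurable_clamp : Measurable clamp :=
  measurable_const.max (measurable_const.min measurable_id)

theorem abs_sub_clamp_le {a : ℝ} (ha : a ∈ Icc (0 : ℝ) 1) (t : ℝ) : |a - clamp t| ≤ |a - t| := by
  have h : clamp a = a := by
    rw [clamp, min_eq_right ha.2, max_eq_right ha.1]
  calc |a - clamp t| = |clamp a - clamp t| := by rw [h]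
    _ ≤ |min 1 a - min 1 t| := by
      simpa [clamp] using abs_max_sub_max_le_max 0 (min 1 a) 0 (min 1 t)
    _ ≤ |a - t| := by
      have := abs_min_sub_min_le_max 1 a 1 t
      simpa using this

/-- Nets for a composition, given nets for the inner components and for the outer class. -/
theorem HasNet.comp {m K : ℕ} {𝓗 : Set ((Fin m → ℝ) → ℝ)} {𝓖 : Set ((Fin K → ℝ) → ℝ)}
    {𝓕 : Set ((Fin m → ℝ) → ℝ)} {δ ε L L' C b : ℝ} (hδ : 0 ≤ δ) (hC : 0 ≤ C) (hb : 0 < b)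
    (h𝓗 : HasNet 𝓗 δ L) (h𝓖 : HasNet 𝓖 ε L')
    (hmod : ∀ g ∈ 𝓖, ∀ x ∈ cube K, ∀ z ∈ cube K, |g x - g z| ≤ C * ‖x - z‖ ^ b)
    (h𝓕 : ∀ f ∈ 𝓕, ∃ (H : (Fin m → ℝ) → Fin K → ℝ) (g : (Fin K → ℝ) → ℝ),
      (∀ j, (fun x => H x j) ∈ 𝓗) ∧ (∀ x ∈ cube m, H x ∈ cube K) ∧ g ∈ 𝓖 ∧
        ∀ x ∈ cube m, f x = g (H x)) :
    HasNet 𝓕 (C * δ ^ b + ε) (K * L + L') := by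
  classical
  obtain ⟨ι, hι, hιne, u, hu, hucard, hucov⟩ := h𝓗
  obtain ⟨κ, hκ, hκne, v, hv, hvcard, hvcov⟩ := h𝓖
  refine ⟨(Fin K → ι) × κ, inferInstance, inferInstance,
    fun p x => v p.2 fun j => clamp (u (p.1 j) x), fun p => ?_, ?_, fun f hf => ?_⟩
  · exact (hv p.2).comp (measurable_pi_lambda _ fun j => measurable_clamp.comp (hu (p.1 j)))
  · rw [Fintype.card_prod, Fintype.card_fun, Fintype.card_fin]
    push_cast
    rw [Real.log_mul (by positivity) (by positivity), Real.log_pow]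
    exact add_le_add (mul_le_mul_of_nonneg_left hucard (by positivity)) hvcard
  · obtain ⟨H, g, hH, hHc, hg, hfg⟩ := h𝓕 f hf
    choose i hi using fun j => hucov _ (hH j)
    obtain ⟨k, hk⟩ := hvcov g hg
    refine ⟨(i, k), fun x hx => ?_⟩
    have hmem : (fun j => clamp (u (i j) x)) ∈ cube K := fun j _ => clamp_mem _
    have h₁ : ‖H x - fun j => clamp (u (i j) x)‖ ≤ δ :=
      (pi_norm_le_iff_of_nonneg hδ).2 fun j =>
        (abs_sub_clamp_le (hHc x hx j (mem_univ j)) _).trans (hi j x hx)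
    have h₂ := hmod g hg _ (hHc x hx) _ hmem
    have h₃ := Real.rpow_le_rpow (norm_nonneg _) h₁ hb.le
    rw [hfg x hx]
    refine (abs_sub_le _ (g fun j => clamp (u (i j) x)) _).trans (add_le_add ?_ (hk _ hmem))
    exact h₂.trans (mul_le_mul_of_nonneg_left h₃ hC)

theorem GCHOM.hasNet (K dmax : ℕ) {dstar : ℕ} (hd : 0 < dstar) {β r : ℝ}
    (hβ : 0 < β) (hr : 0 < r) (q m : ℕ) :
    ∃ C : ℝ, 0 ≤ C ∧ ∀ ε : ℝ, 0 < ε → ε ≤ 1 →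
      HasNet (GCHOM K dmax dstar β r q m) ε (C * ε ^ (-(dstar / (β * min 1 β ^ q) : ℝ))) := by
  have hb : 0 < min 1 β := by positivity
  induction q generalizing m with
  | zero =>
    obtain ⟨C, hC, hnet⟩ := hasNet_GH_union_GM m dmax hd hβ hr
    refine ⟨C, hC, fun ε hε hε1 => ?_⟩
    obtain ⟨ι, hι, hne, g, hg, hcard, hcov⟩ := hnet ε hε hε1
    refine ⟨ι, hι, hne, g, hg, by simpa using hcard, ?_⟩
    rintro f ⟨h, hh, hfh⟩
    obtain ⟨i, hi⟩ := hcov h hh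
    exact ⟨i, fun x hx => by rw [hfh x hx]; exact hi x hx⟩
  | succ q ih =>
    obtain ⟨C₁, hC₁, hnet₁⟩ := hasNet_GH_union_GM m dmax hd hβ hr
    obtain ⟨C₂, hC₂, hnet₂⟩ := ih K
    obtain ⟨C, hC, hmod⟩ := GCHOM.exists_abs_sub_le K dmax hd hβ hr q
    set b := min 1 β ^ (q + 1) with hbdef
    have hb0 : 0 < b := by positivity
    set ρ₀ : ℝ := dstar / (β * min 1 β ^ q) with hρ₀
    set ρ : ℝ := dstar / (β * b) with hρ
    have hρ₀0 : 0 ≤ ρ₀ := by positivity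
    have hρ0 : 0 ≤ ρ := by positivity
    have hρρ : ρ₀ ≤ ρ := by
      refine div_le_div_of_nonneg_left (by positivity) (by positivity) ?_
      refine mul_le_mul_of_nonneg_left ?_ hβ.le
      rw [hbdef, pow_succ]
      exact mul_le_of_le_one_right (by positivity) (min_le_left _ _)
    set C' := 2 * (C + 1) with hC'
    have hC'1 : 1 ≤ C' := by rw [hC']; linarith
    have hC'0 : 0 < C' := by linarith
    refine ⟨K * (C₁ * C' ^ ρ) + C₂ * 2 ^ ρ₀, by positivity, fun ε hε hε1 => ?_⟩
    set δ := (ε / C') ^ (1 / b) with hδ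
    have hδ0 : 0 < δ := by positivity
    have hδ1 : δ ≤ 1 := Real.rpow_le_one (by positivity)
      ((div_le_one hC'0).2 (hε1.trans hC'1)) (by positivity)
    have hδb : δ ^ b = ε / C' := by
      rw [hδ, ← Real.rpow_mul (by positivity), one_div_mul_cancel hb0.ne', Real.rpow_one]
    have hcomp := HasNet.comp (𝓕 := GCHOM K dmax dstar β r (q + 1) m) hδ0.le hC hb0
      (hnet₁ δ hδ0 hδ1) (hnet₂ (ε / 2) (by linarith) (by linarith)) (hmod K) (fun f hf => hf)
    refine hcomp.mono ?_ ?_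
    · rw [hδb]
      have : C * (ε / C') ≤ ε / 2 := by
        rw [hC', mul_div_assoc', div_le_div_iff₀ (by positivity) (by norm_num)]
        nlinarith
      linarith
    · have e₁ : δ ^ (-(dstar / β : ℝ)) = C' ^ ρ * ε ^ (-ρ) := by
        rw [hδ, ← Real.rpow_mul (by positivity)]
        have : 1 / b * -(dstar / β : ℝ) = -ρ := by
          rw [hρ]
          field_simp
        rw [this, Real.div_rpow hε.le hC'0.le, Real.rpow_neg hC'0.le, div_inv_eq_mul, mul_comm]
      have e₂ : (ε / 2) ^ (-ρ₀) ≤ 2 ^ ρ₀ * ε ^ (-ρ) := by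
        rw [Real.div_rpow hε.le zero_le_two, Real.rpow_neg zero_le_two, div_inv_eq_mul, mul_comm]
        refine mul_le_mul_of_nonneg_left ?_ (by positivity)
        exact Real.rpow_le_rpow_of_exponent_ge hε hε1 (by linarith)
      rw [e₁]
      have h₁ := mul_le_mul_of_nonneg_left e₂ hC₂
      calc _ ≤ K * (C₁ * (C' ^ ρ * ε ^ (-ρ))) + C₂ * (2 ^ ρ₀ * ε ^ (-ρ)) := by gcongr
        _ = _ := by ring

/-! ## Samples -/

theorem measurable_snoc {α : Type*} [MeasurableSpace α] (n : ℕ) :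
    Measurable fun p : (Fin n → α) × α => (Fin.snoc p.1 p.2 : Fin (n + 1) → α) := by
  refine measurable_pi_lambda _ fun i => ?_
  induction i using Fin.lastCases with
  | last => simpa using measurable_snd
  | cast i =>
    simp only [Fin.snoc_castSucc]
    exact (measurable_pi_apply i).comp measurable_fst

theorem iid_eq_pi {α : Type*} [MeasurableSpace α] (μ : Measure α) [IsProbabilityMeasure μ]
    (n : ℕ) : iid μ n = Measure.pi fun _ => μ := by
  induction n with
  | zero =>
    refine (Measure.pi_eq fun s _ => ?_).symm
    simp [iid]
  | succ n ih =>
    refine (Measure.pi_eq fun s hs => ?_).symm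
    have hmeas : Measurable fun p : Fin n → α =>
        μ.map fun a => (Fin.snoc p a : Fin (n + 1) → α) := by
      refine Measure.measurable_of_measurable_coe _ fun t ht => ?_
      have : ∀ p : Fin n → α, (μ.map fun a => (Fin.snoc p a : Fin (n + 1) → α)) t =
          μ (Prod.mk p ⁻¹' ((fun p : (Fin n → α) × α => (Fin.snoc p.1 p.2 : Fin (n + 1) → α)) ⁻¹' t)) :=
        fun p => Measure.map_apply ((measurable_snoc n).comp measurable_prodMk_left) ht
      simp only [this]
      exact measurable_measure_prodMk_left (measurable_snoc n ht)
    have hms : MeasurableSet (univ.pi s) := MeasurableSet.univ_pi hs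
    have hval : ∀ p : Fin n → α, (μ.map fun a => (Fin.snoc p a : Fin (n + 1) → α)) (univ.pi s) =
        (univ.pi fun i : Fin n => s i.castSucc).indicator (fun _ => μ (s (Fin.last n))) p := by
      intro p
      have hsn : Measurable fun a => (Fin.snoc p a : Fin (n + 1) → α) :=
        (measurable_snoc n).comp measurable_prodMk_left
      rw [Measure.map_apply hsn hms]
      by_cases hp : p ∈ univ.pi fun i : Fin n => s i.castSucc
      · rw [indicator_of_mem hp]
        congr 1
        ext a
        simp only [mem_preimage, mem_univ_pi, Fin.forall_fin_succ', Fin.snoc_castSucc,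
          Fin.snoc_last]
        exact ⟨fun h => h.2, fun h => ⟨fun i => hp i (mem_univ i), h⟩⟩
      · rw [indicator_of_notMem hp]
        refine measure_mono_null (t := ∅) (fun a ha => hp ?_) measure_empty
        intro i _
        have := ha i.castSucc (mem_univ _)
        simpa using this
    rw [iid, Measure.bind_apply hms hmeas.aemeasurable]
    simp only [hval]
    rw [lintegral_indicator (MeasurableSet.univ_pi fun i => hs _), setLIntegral_const, ih,
      Measure.pi_pi, Fin.prod_univ_castSucc, mul_comm]

/-! ## Empirical risk minimization over a finite class -/

theorem exists_measurable_argmin {Ω ι : Type*} [MeasurableSpace Ω] [Finite ι] [Nonempty ι]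
    {S : ι → Ω → ℝ} (hS : ∀ i, Measurable (S i)) :
    ∃ f : Ω → ι, Measurable[_, ⊤] f ∧ ∀ ω i, S (f ω) ω ≤ S i ω := by
  classical
  obtain ⟨e, he⟩ := exists_surjective_nat ι
  have hex : ∀ ω, ∃ k : ℕ, ∀ i, S (e k) ω ≤ S i ω := fun ω => by
    obtain ⟨i₀, hi₀⟩ := Finite.exists_min fun i => S i ω
    obtain ⟨k, rfl⟩ := he i₀
    exact ⟨k, hi₀⟩
  refine ⟨fun ω => e (Nat.find (hex ω)), ?_, fun ω => Nat.find_spec (hex ω)⟩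
  have hfind : Measurable fun ω => Nat.find (hex ω) := by
    refine measurable_find hex fun k => ?_
    rw [ofPred_forall]
    exact MeasurableSet.iInter fun i => measurableSet_le (hS _) (hS _)
  let _ : MeasurableSpace ι := ⊤
  exact (measurable_from_nat (f := e)).comp hfind

theorem integrable_of_abs_le {Ω : Type*} [MeasurableSpace Ω] {μ : Measure Ω} [IsFiniteMeasure μ]
    {f : Ω → ℝ} (hf : Measurable f) {C : ℝ} (hC : ∀ ω, |f ω| ≤ C) : Integrable f μ :=
  Integrable.of_bound hf.aestronglyMeasurable C (Filter.Eventually.of_forall hC)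

theorem integrable_comp_finite {Ω ι : Type*} [MeasurableSpace Ω] {μ : Measure Ω}
    [IsFiniteMeasure μ] [Fintype ι] {s : Ω → ι} (hs : Measurable[_, ⊤] s) (φ : ι → ℝ) :
    Integrable (fun ω => φ (s ω)) μ := by
  let _ : MeasurableSpace ι := ⊤
  refine integrable_of_abs_le (C := ∑ i, |φ i|)
    ((measurable_from_top (f := φ)).comp hs) fun ω => ?_
  exact Finset.single_le_sum (f := fun i => |φ i|) (fun _ _ => abs_nonneg _) (Finset.mem_univ _)

theorem measurable_selection {Ω Ω' ι : Type*} [MeasurableSpace Ω] [MeasurableSpace Ω'] [Countable ι]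
    {s : Ω → ι} (hs : Measurable[_, ⊤] s) {φ : ι → Ω' → ℝ} (hφ : ∀ i, Measurable (φ i))
    {u : Ω → Ω'} (hu : Measurable u) : Measurable fun ω => φ (s ω) (u ω) := by
  let _ : MeasurableSpace ι := ⊤
  have : Measurable fun p : ι × Ω' => φ p.1 p.2 := measurable_from_prod_countable_right hφ
  exact this.comp (hs.prodMk hu)

theorem exp_le_one_add_add_sq {x : ℝ} (hx : |x| ≤ 1) : Real.exp x ≤ 1 + x + x ^ 2 := by
  have := abs_le.1 (Real.abs_exp_sub_one_sub_id_le hx)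
  linarith [this.2]

/-- An oracle inequality for a data-driven selection among finitely many candidates under a
Bernstein-type condition, by an exponential moment argument. -/
theorem integral_selection_le {Ω ι : Type*} [MeasurableSpace Ω] {μ : Measure Ω}
    [IsProbabilityMeasure μ] [Fintype ι] [Nonempty ι] {n : ℕ} (hn : 0 < n) {Z : ι → Ω → ℝ}
    (hZ : ∀ i, Measurable (Z i)) (hZ1 : ∀ i ω, |Z i ω| ≤ 1) {lam a : ℝ} (hlam : 0 < lam)
    (hlam1 : lam ≤ 1)
    (hvar : ∀ i, lam * ∫ ω, Z i ω ^ 2 ∂μ ≤ (∫ ω, Z i ω ∂μ) / 2 + a / 2)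
    {s : (Fin n → Ω) → ι} (hs : Measurable[_, ⊤] s) (i₀ : ι)
    (hmin : ∀ ω, ∑ k, Z (s ω) (ω k) ≤ ∑ k, Z i₀ (ω k)) :
    ∫ ω, (∫ x, Z (s ω) x ∂μ) ∂(Measure.pi fun _ : Fin n => μ) ≤
      a + 2 * Real.log (Fintype.card ι) / (lam * n) + 2 * ∫ x, Z i₀ x ∂μ := by
  set ν := Measure.pi fun _ : Fin n => μ with hν
  set m : ι → ℝ := fun i => ∫ x, Z i x ∂μ with hm
  have hn0 : (0 : ℝ) < n := by exact_mod_cast hn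
  have hZint : ∀ i, Integrable (Z i) μ := fun i => integrable_of_abs_le (hZ i) (hZ1 i)
  have hZ2int : ∀ i, Integrable (fun ω => Z i ω ^ 2) μ := fun i =>
    integrable_of_abs_le ((hZ i).pow_const 2) (C := 1) fun ω => by
      rw [abs_of_nonneg (sq_nonneg _), ← sq_abs]
      exact pow_le_one₀ (abs_nonneg _) (hZ1 i ω)
  have hlamZ : ∀ i ω, |-(lam * Z i ω)| ≤ 1 := fun i ω => by
    rw [abs_neg, abs_mul, abs_of_pos hlam]
    exact mul_le_one₀ hlam1 (abs_nonneg _) (hZ1 i ω)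
  have hexpint : ∀ i, Integrable (fun ω => Real.exp (-(lam * Z i ω))) μ := fun i =>
    integrable_of_abs_le ((hZ i).const_mul lam).neg.exp (C := Real.exp 1) fun ω => by
      rw [abs_of_pos (Real.exp_pos _), Real.exp_le_exp]
      exact (abs_le.1 (hlamZ i ω)).2
  have hmgf : ∀ i, ∫ ω, Real.exp (-(lam * Z i ω)) ∂μ ≤ Real.exp (-(lam * (m i / 2 - a / 2))) := by
    intro i
    have h₁ : ∫ ω, Real.exp (-(lam * Z i ω)) ∂μ ≤
        ∫ ω, (1 - lam * Z i ω + lam ^ 2 * Z i ω ^ 2) ∂μ := by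
      refine integral_mono (hexpint i) ?_ fun ω => ?_
      · exact ((integrable_const _).sub ((hZint i).const_mul _)).add ((hZ2int i).const_mul _)
      · have := exp_le_one_add_add_sq (hlamZ i ω)
        dsimp only
        nlinarith
    have h₂ : ∫ ω, (1 - lam * Z i ω + lam ^ 2 * Z i ω ^ 2) ∂μ =
        1 - lam * m i + lam ^ 2 * ∫ ω, Z i ω ^ 2 ∂μ := by
      have hsub : Integrable (fun ω => 1 - lam * Z i ω) μ :=
        (integrable_const _).sub ((hZint i).const_mul _)
      rw [integral_add hsub
        ((hZ2int i).const_mul _), integral_sub (integrable_const _) ((hZint i).const_mul _),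
        integral_const_mul, integral_const_mul]
      simp [hm]
    have h₃ := mul_le_mul_of_nonneg_left (hvar i) hlam.le
    have h₄ := Real.add_one_le_exp (-(lam * (m i / 2 - a / 2)))
    have h₅ : m i = ∫ ω, Z i ω ∂μ := rfl
    rw [← h₅] at h₃
    nlinarith
  set W : (Fin n → Ω) → ℝ := fun ω =>
    lam * (n * (m (s ω) / 2 - a / 2) - ∑ k, Z (s ω) (ω k)) with hW
  set V : ι → (Fin n → Ω) → ℝ := fun i ω =>
    Real.exp (lam * (n * (m i / 2 - a / 2))) * ∏ k, Real.exp (-(lam * Z i (ω k))) with hV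
  have hexpW : ∀ ω, Real.exp (W ω) = V (s ω) ω := fun ω => by
    rw [hW, hV]
    dsimp only
    rw [← Real.exp_sum, ← Real.exp_add, Finset.sum_neg_distrib, ← Finset.mul_sum]
    congr 1
    ring
  have hVint : ∀ i, Integrable (V i) ν := fun i =>
    (Integrable.fintype_prod (f := fun _ : Fin n => fun x => Real.exp (-(lam * Z i x)))
      fun _ => hexpint i).const_mul _
  have hVle : ∀ i, ∫ ω, V i ω ∂ν ≤ 1 := fun i => by
    rw [hV]
    dsimp only
    rw [integral_const_mul, hν,
      integral_fintype_prod_eq_pow (fun x => Real.exp (-(lam * Z i x))), Fintype.card_fin]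
    calc _ ≤ Real.exp (lam * (n * (m i / 2 - a / 2))) *
          Real.exp (-(lam * (m i / 2 - a / 2))) ^ n := by
          refine mul_le_mul_of_nonneg_left ?_ (Real.exp_pos _).le
          exact pow_le_pow_left₀ (integral_nonneg fun _ => (Real.exp_pos _).le) (hmgf i) n
      _ = 1 := by
          rw [← Real.exp_nat_mul, ← Real.exp_add]
          convert Real.exp_zero using 2
          ring
  have hVnn : ∀ i ω, 0 ≤ V i ω := fun i ω =>
    mul_nonneg (Real.exp_pos _).le (Finset.prod_nonneg fun _ _ => (Real.exp_pos _).le)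
  have hmint : Integrable (fun ω => m (s ω)) ν := integrable_comp_finite hs m
  have hsumint : Integrable (fun ω => ∑ k, Z (s ω) (ω k)) ν := by
    refine integrable_finsetSum _ fun k _ => ?_
    exact integrable_of_abs_le (measurable_selection hs hZ (measurable_pi_apply k))
      fun ω => hZ1 _ _
  have hWint : Integrable W ν :=
    ((((hmint.div_const 2).sub (integrable_const _)).const_mul _).sub hsumint).const_mul _
  have hexpWmeas : Measurable fun ω => Real.exp (W ω) := by
    simp only [hexpW]
    refine measurable_selection hs (fun i => ?_) measurable_id
    refine Measurable.const_mul (Finset.measurable_prod _ fun k _ => ?_) _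
    exact ((((hZ i).comp (measurable_pi_apply k)).const_mul lam).neg).exp
  have hle : ∀ ω, Real.exp (W ω) ≤ ∑ i, V i ω := fun ω => by
    rw [hexpW]
    exact Finset.single_le_sum (f := fun i => V i ω) (fun i _ => hVnn i ω) (Finset.mem_univ _)
  have hVsum : Integrable (fun ω => ∑ i, V i ω) ν := integrable_finsetSum _ fun i _ => hVint i
  have hexpWint : Integrable (fun ω => Real.exp (W ω)) ν :=
    hVsum.mono' hexpWmeas.aestronglyMeasurable (Filter.Eventually.of_forall fun ω => by
      rw [Real.norm_eq_abs, abs_of_pos (Real.exp_pos _)]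
      exact hle ω)
  have hjensen : Real.exp (∫ ω, W ω ∂ν) ≤ Fintype.card ι := by
    calc Real.exp (∫ ω, W ω ∂ν) ≤ ∫ ω, Real.exp (W ω) ∂ν :=
          convexOn_exp.map_integral_le Real.continuous_exp.continuousOn isClosed_univ
            (by simp) hWint hexpWint
      _ ≤ ∫ ω, ∑ i, V i ω ∂ν := integral_mono hexpWint hVsum hle
      _ = ∑ i, ∫ ω, V i ω ∂ν := integral_finsetSum _ fun i _ => hVint i
      _ ≤ ∑ _i : ι, (1 : ℝ) := Finset.sum_le_sum fun i _ => hVle i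
      _ = Fintype.card ι := by simp
  have hlog : ∫ ω, W ω ∂ν ≤ Real.log (Fintype.card ι) := by
    have := Real.log_le_log (Real.exp_pos _) hjensen
    rwa [Real.log_exp] at this
  have hWeq : ∫ ω, W ω ∂ν = lam * (n * ((∫ ω, m (s ω) ∂ν) / 2 - a / 2) -
      ∫ ω, ∑ k, Z (s ω) (ω k) ∂ν) := by
    rw [hW]
    dsimp only
    have hsub : Integrable (fun ω => m (s ω) / 2 - a / 2) ν :=
      (hmint.div_const 2).sub (integrable_const _)
    rw [integral_const_mul, integral_sub (hsub.const_mul _)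
      hsumint, integral_const_mul, integral_sub (hmint.div_const 2) (integrable_const _),
      integral_div]
    simp
  have hZi₀ : ∀ k : Fin n, Integrable (fun ω : Fin n → Ω => Z i₀ (ω k)) ν := fun k =>
    integrable_of_abs_le ((hZ i₀).comp (measurable_pi_apply k)) fun ω => hZ1 _ _
  have hsum : ∫ ω, ∑ k, Z (s ω) (ω k) ∂ν ≤ n * m i₀ := by
    calc ∫ ω, ∑ k, Z (s ω) (ω k) ∂ν ≤ ∫ ω, ∑ k, Z i₀ (ω k) ∂ν :=
          integral_mono hsumint (integrable_finsetSum _ fun k _ => hZi₀ k) hmin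
      _ = ∑ k : Fin n, ∫ ω, Z i₀ (ω k) ∂ν := integral_finsetSum _ fun k _ => hZi₀ k
      _ = ∑ _k : Fin n, m i₀ := by
          refine Finset.sum_congr rfl fun k _ => ?_
          exact integral_comp_eval (μ := fun _ : Fin n => μ) (hZ i₀).aestronglyMeasurable
      _ = n * m i₀ := by simp
  rw [hWeq] at hlog
  have hfin : lam * n * ((∫ ω, m (s ω) ∂ν) / 2 - a / 2 - m i₀) ≤ Real.log (Fintype.card ι) := by
    refine le_trans ?_ hlog
    rw [mul_assoc]
    refine mul_le_mul_of_nonneg_left ?_ hlam.le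
    linarith
  have hln : 0 < lam * n := by positivity
  rw [← le_div_iff₀' hln] at hfin
  rw [mul_div_assoc]
  linarith

/-! ## The 0-1 risk under a data distribution -/

theorem jointMeasure_eq {d : ℕ} {η : (Fin d → ℝ) → ℝ} (hη : Measurable η)
    (Q : Measure (Fin d → ℝ)) :
    jointMeasure η Q =
      (Q.withDensity fun x => ENNReal.ofReal (η x)).map (fun x => (x, (1 : ℝ))) +
        (Q.withDensity fun x => ENNReal.ofReal (1 - η x)).map (fun x => (x, (-1 : ℝ))) := by
  have hη' : Measurable fun x => 1 - η x := measurable_const.sub hη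
  have hval : ∀ {t : Set ((Fin d → ℝ) × ℝ)}, MeasurableSet t → ∀ x,
      (ENNReal.ofReal (η x) • Measure.dirac (x, (1 : ℝ)) +
        ENNReal.ofReal (1 - η x) • Measure.dirac (x, (-1 : ℝ))) t =
      ((fun x => (x, (1 : ℝ))) ⁻¹' t).indicator (fun x => ENNReal.ofReal (η x)) x +
        ((fun x => (x, (-1 : ℝ))) ⁻¹' t).indicator (fun x => ENNReal.ofReal (1 - η x)) x := by
    intro t ht x
    by_cases h₁ : (x, (1 : ℝ)) ∈ t <;> by_cases h₂ : (x, (-1 : ℝ)) ∈ t <;>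
      simp [Measure.dirac_apply' _ ht, h₁, h₂]
  have hpre : ∀ (y : ℝ) {t : Set ((Fin d → ℝ) × ℝ)}, MeasurableSet t →
      MeasurableSet ((fun x : Fin d → ℝ => (x, y)) ⁻¹' t) := fun y _ ht =>
    measurable_prodMk_right ht
  ext t ht
  rw [jointMeasure, Measure.bind_apply ht]
  · simp only [hval ht]
    rw [lintegral_add_left (hη.ennreal_ofReal.indicator (hpre 1 ht)),
      lintegral_indicator (hpre 1 ht), lintegral_indicator (hpre (-1) ht), Measure.add_apply,
      Measure.map_apply measurable_prodMk_right ht, Measure.map_apply measurable_prodMk_right ht,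
      withDensity_apply _ (hpre 1 ht), withDensity_apply _ (hpre (-1) ht)]
  · refine (Measure.measurable_of_measurable_coe _ fun t ht => ?_).aemeasurable
    simp only [hval ht]
    exact (hη.ennreal_ofReal.indicator (hpre 1 ht)).add
      (hη'.ennreal_ofReal.indicator (hpre (-1) ht))

namespace DataDist

variable {d : ℕ} (D : DataDist d)

instance isProbabilityMeasure_Q : IsProbabilityMeasure D.Q := D.Q_prob

theorem ae_mem_cube : ∀ᵐ x ∂D.Q, x ∈ cube d :=
  (prob_compl_eq_zero_iff (isClosed_cube d).measurableSet).2 D.Q_cube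

instance isProbabilityMeasure_P : IsProbabilityMeasure D.P := by
  constructor
  have hη' : Measurable fun x => ENNReal.ofReal (D.η x) := D.η_meas.ennreal_ofReal
  rw [P, jointMeasure_eq D.η_meas, Measure.add_apply,
    Measure.map_apply measurable_prodMk_right .univ,
    Measure.map_apply measurable_prodMk_right .univ, preimage_univ, preimage_univ,
    withDensity_apply _ .univ, withDensity_apply _ .univ, setLIntegral_univ, setLIntegral_univ,
    ← lintegral_add_left hη']
  have : ∀ x, ENNReal.ofReal (D.η x) + ENNReal.ofReal (1 - D.η x) = 1 := fun x => by
    rw [← ENNReal.ofReal_add (D.η_mem x).1 (by linarith [(D.η_mem x).2])]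
    simp
  simp [this]

theorem integral_P {φ : (Fin d → ℝ) × ℝ → ℝ} (hφ : Measurable φ) {C : ℝ} (hC : ∀ p, |φ p| ≤ C) :
    ∫ p, φ p ∂D.P = ∫ x, (D.η x * φ (x, 1) + (1 - D.η x) * φ (x, -1)) ∂D.Q := by
  have hinteg : Integrable φ D.P := integrable_of_abs_le hφ hC
  have hη' : Measurable fun x => 1 - D.η x := measurable_const.sub D.η_meas
  have hφy : ∀ y : ℝ, Measurable fun x : Fin d → ℝ => φ (x, y) := fun y =>
    hφ.comp measurable_prodMk_right
  have hterm : ∀ {w : (Fin d → ℝ) → ℝ} (y : ℝ), Measurable w → (∀ x, w x ∈ Icc (0 : ℝ) 1) →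
      Integrable (fun x => w x * φ (x, y)) D.Q := fun y hw hw1 =>
    integrable_of_abs_le (hw.mul (hφy y)) (C := C) fun x => by
      rw [abs_mul, abs_of_nonneg (hw1 x).1]
      exact (mul_le_of_le_one_left (abs_nonneg _) (hw1 x).2).trans (hC _)
  have hmap : ∀ {w : (Fin d → ℝ) → ℝ} (y : ℝ), Measurable w → (∀ x, 0 ≤ w x) →
      ∫ p, φ p ∂(D.Q.withDensity fun x => ENNReal.ofReal (w x)).map (fun x => (x, y)) =
        ∫ x, w x * φ (x, y) ∂D.Q := fun {w} y hw hw0 => by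
    rw [integral_map measurable_prodMk_right.aemeasurable hφ.aestronglyMeasurable,
      integral_withDensity_eq_integral_toReal_smul hw.ennreal_ofReal (by simp)]
    simp [ENNReal.toReal_ofReal (hw0 _)]
  have hη1 : ∀ x, 1 - D.η x ∈ Icc (0 : ℝ) 1 := fun x =>
    ⟨by linarith [(D.η_mem x).2], by linarith [(D.η_mem x).1]⟩
  rw [P, jointMeasure_eq D.η_meas] at hinteg ⊢
  rw [integral_add_measure hinteg.left_of_add_measure hinteg.right_of_add_measure,
    hmap 1 D.η_meas fun x => (D.η_mem x).1, hmap (-1) hη' fun x => (hη1 x).1,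
    integral_add (hterm 1 D.η_meas D.η_mem) (hterm (-1) hη' hη1)]

end DataDist

theorem measurable_sgn : Measurable sgn :=
  Measurable.ite measurableSet_Ici measurable_const measurable_const

theorem sgn_eq_or (t : ℝ) : sgn t = 1 ∨ sgn t = -1 := by
  unfold sgn
  split_ifs <;> simp

/-- The 0-1 loss of the classifier `sgn ∘ g`. -/
def loss01 {d : ℕ} (g : (Fin d → ℝ) → ℝ) (p : (Fin d → ℝ) × ℝ) : ℝ :=
  if sgn (g p.1) = p.2 then 0 else 1

/-- The indicator that `sgn ∘ g` and `sgn ∘ f` disagree. -/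
def disagree {d : ℕ} (g f : (Fin d → ℝ) → ℝ) (x : Fin d → ℝ) : ℝ :=
  if sgn (g x) = sgn (f x) then 0 else 1

theorem measurable_loss01 {d : ℕ} {g : (Fin d → ℝ) → ℝ} (hg : Measurable g) :
    Measurable (loss01 g) :=
  Measurable.ite (measurableSet_eq_fun (measurable_sgn.comp (hg.comp measurable_fst))
    measurable_snd) measurable_const measurable_const

theorem loss01_mem {d : ℕ} (g : (Fin d → ℝ) → ℝ) (p : (Fin d → ℝ) × ℝ) :
    loss01 g p ∈ Icc (0 : ℝ) 1 := by
  unfold loss01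
  split_ifs <;> simp

theorem abs_loss01_sub_le {d : ℕ} (g f : (Fin d → ℝ) → ℝ) (p : (Fin d → ℝ) × ℝ) :
    |loss01 g p - loss01 f p| ≤ 1 :=
  abs_sub_le_of_le_of_le (loss01_mem g p).1 (loss01_mem g p).2 (loss01_mem f p).1
    (loss01_mem f p).2 |>.trans (by norm_num)

theorem measurable_disagree {d : ℕ} {g f : (Fin d → ℝ) → ℝ} (hg : Measurable g)
    (hf : Measurable f) : Measurable (disagree g f) :=
  Measurable.ite (measurableSet_eq_fun (measurable_sgn.comp hg) (measurable_sgn.comp hf))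
    measurable_const measurable_const

theorem disagree_mem {d : ℕ} (g f : (Fin d → ℝ) → ℝ) (x : Fin d → ℝ) :
    disagree g f x ∈ Icc (0 : ℝ) 1 := by
  unfold disagree
  split_ifs <;> simp

theorem risk01_eq_integral {d : ℕ} (P : Measure ((Fin d → ℝ) × ℝ)) {g : (Fin d → ℝ) → ℝ}
    (hg : Measurable g) : risk01 P g = ∫ p, loss01 g p ∂P := by
  have hms : MeasurableSet {p : (Fin d → ℝ) × ℝ | sgn (g p.1) ≠ p.2} :=
    (measurableSet_eq_fun (measurable_sgn.comp (hg.comp measurable_fst)) measurable_snd).compl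
  have : loss01 g = {p : (Fin d → ℝ) × ℝ | sgn (g p.1) ≠ p.2}.indicator fun _ => (1 : ℝ) := by
    ext p
    by_cases h : sgn (g p.1) = p.2 <;> simp [loss01, h]
  rw [this, integral_indicator_const _ hms, risk01, Measure.real, smul_eq_mul, mul_one]

namespace DataDist

variable {d : ℕ} (D : DataDist d)

/-- The regression function `2η - 1`, whose sign is the Bayes classifier. -/
def regr (x : Fin d → ℝ) : ℝ := 2 * D.η x - 1

theorem measurable_regr : Measurable D.regr := (D.η_meas.const_mul 2).sub_const 1

theorem abs_regr_le_one (x : Fin d → ℝ) : |D.regr x| ≤ 1 := by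
  have := D.η_mem x
  rw [regr, abs_le]
  constructor <;> linarith [this.1, this.2]

theorem integral_loss01_sub {g : (Fin d → ℝ) → ℝ} (hg : Measurable g) :
    ∫ p, (loss01 g p - loss01 D.regr p) ∂D.P = ∫ x, |D.regr x| * disagree g D.regr x ∂D.Q := by
  rw [D.integral_P (φ := fun p => loss01 g p - loss01 D.regr p) ((measurable_loss01 hg).sub (measurable_loss01 D.measurable_regr))
    (abs_loss01_sub_le _ _)]
  congr 1
  ext x
  have habs : (sgn (D.regr x) = 1 ∧ |D.regr x| = 2 * D.η x - 1) ∨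
      (sgn (D.regr x) = -1 ∧ |D.regr x| = 1 - 2 * D.η x) := by
    rcases le_or_gt 0 (D.regr x) with h | h
    · left
      exact ⟨if_pos h, abs_of_nonneg h⟩
    · right
      refine ⟨if_neg h.not_ge, ?_⟩
      rw [abs_of_neg h, regr]
      ring
  have h1 : (1 : ℝ) ≠ -1 := by norm_num
  rcases habs with ⟨hs, ha⟩ | ⟨hs, ha⟩ <;> rcases sgn_eq_or (g x) with hs' | hs' <;>
    simp only [loss01, disagree, hs, hs', ha, h1, h1.symm, if_true, if_false] <;> ring

theorem integral_loss01_sub_sq {g : (Fin d → ℝ) → ℝ} (hg : Measurable g) :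
    ∫ p, (loss01 g p - loss01 D.regr p) ^ 2 ∂D.P = ∫ x, disagree g D.regr x ∂D.Q := by
  rw [D.integral_P (φ := fun p => (loss01 g p - loss01 D.regr p) ^ 2) (C := 1)
    (((measurable_loss01 hg).sub (measurable_loss01 D.measurable_regr)).pow_const 2)]
  · congr 1
    ext x
    have h1 : (1 : ℝ) ≠ -1 := by norm_num
    rcases sgn_eq_or (D.regr x) with hs | hs <;> rcases sgn_eq_or (g x) with hs' | hs' <;>
      simp only [loss01, disagree, hs, hs', h1, h1.symm, if_true, if_false] <;> ring
  · intro p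
    rw [abs_of_nonneg (sq_nonneg _), ← sq_abs]
    exact pow_le_one₀ (abs_nonneg _) (abs_loss01_sub_le _ _ _)

theorem risk01_sub_risk01_regr {g : (Fin d → ℝ) → ℝ} (hg : Measurable g) :
    risk01 D.P g - risk01 D.P D.regr = ∫ p, (loss01 g p - loss01 D.regr p) ∂D.P := by
  have hinteg : ∀ {f : (Fin d → ℝ) → ℝ}, Measurable f → Integrable (loss01 f) D.P := fun {f} hf =>
    integrable_of_abs_le (measurable_loss01 hf) (C := 1) fun p => by
      rw [abs_of_nonneg (loss01_mem f p).1]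
      exact (loss01_mem f p).2
  rw [risk01_eq_integral _ hg, risk01_eq_integral _ D.measurable_regr,
    integral_sub (hinteg hg) (hinteg D.measurable_regr)]

theorem excess01_le {g : (Fin d → ℝ) → ℝ} (hg : Measurable g) :
    excess01 D.P g ≤ ∫ p, (loss01 g p - loss01 D.regr p) ∂D.P := by
  have : Nonempty {g : (Fin d → ℝ) → ℝ // Measurable g} := ⟨⟨g, hg⟩⟩
  have hbayes : risk01 D.P D.regr ≤ bayes01 D.P := le_ciInf fun f => by
    have h := D.risk01_sub_risk01_regr f.2
    rw [D.integral_loss01_sub f.2] at h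
    have : 0 ≤ ∫ x, |D.regr x| * disagree f.1 D.regr x ∂D.Q :=
      integral_nonneg fun x => mul_nonneg (abs_nonneg _) (disagree_mem _ _ x).1
    linarith
  rw [← D.risk01_sub_risk01_regr hg, excess01]
  linarith

theorem integrable_abs_regr_mul_disagree {g : (Fin d → ℝ) → ℝ} (hg : Measurable g) :
    Integrable (fun x => |D.regr x| * disagree g D.regr x) D.Q :=
  integrable_of_abs_le
    ((continuous_abs.measurable.comp D.measurable_regr).mul
      (measurable_disagree hg D.measurable_regr)) (C := 1) fun x => by
    rw [abs_mul, abs_abs, abs_of_nonneg (disagree_mem _ _ x).1]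
    exact mul_le_one₀ (D.abs_regr_le_one x) (disagree_mem _ _ x).1 (disagree_mem _ _ x).2

theorem measurableSet_margin (t : ℝ) : MeasurableSet {x | |D.regr x| ≤ t} :=
  measurableSet_le (continuous_abs.measurable.comp D.measurable_regr) measurable_const

theorem integral_margin (t : ℝ) :
    ∫ x, {x | |D.regr x| ≤ t}.indicator (fun _ => t) x ∂D.Q = t * D.Q.real {x | |D.regr x| ≤ t} := by
  rw [integral_indicator_const _ (D.measurableSet_margin t), smul_eq_mul, mul_comm]

theorem integrable_margin (t : ℝ) :
    Integrable ({x | |D.regr x| ≤ t}.indicator fun _ => t) D.Q :=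
  (integrable_const t).indicator (D.measurableSet_margin t)

/-- The margin condition yields a Bernstein condition for the excess loss. -/
theorem mul_integral_loss01_sub_sq_le {g : (Fin d → ℝ) → ℝ} (hg : Measurable g) {t : ℝ}
    (ht : 0 < t) :
    t * ∫ p, (loss01 g p - loss01 D.regr p) ^ 2 ∂D.P ≤
      ∫ p, (loss01 g p - loss01 D.regr p) ∂D.P + t * D.Q.real {x | |D.regr x| ≤ t} := by
  rw [D.integral_loss01_sub_sq hg, D.integral_loss01_sub hg, ← D.integral_margin,
    ← integral_const_mul, ← integral_add (D.integrable_abs_regr_mul_disagree hg)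
      (D.integrable_margin t)]
  refine integral_mono_of_nonneg
    (Filter.Eventually.of_forall fun x => mul_nonneg ht.le (disagree_mem _ _ x).1)
    ((D.integrable_abs_regr_mul_disagree hg).add (D.integrable_margin t))
    (Filter.Eventually.of_forall fun x => ?_)
  have h := disagree_mem g D.regr x
  dsimp only
  by_cases hx : |D.regr x| ≤ t
  · rw [indicator_of_mem (by exact hx)]
    nlinarith [mul_nonneg (abs_nonneg (D.regr x)) h.1, h.2]
  · rw [indicator_of_notMem (by exact hx), add_zero]
    exact mul_le_mul_of_nonneg_right (not_le.1 hx).le h.1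

/-- A plug-in classifier built from a uniformly accurate estimate of `η` errs only where the
margin is small. -/
theorem integral_loss01_sub_le {g : (Fin d → ℝ) → ℝ} (hg : Measurable g) {t : ℝ} (ht : 0 < t)
    (happrox : ∀ᵐ x ∂D.Q, |D.η x - g x| ≤ t / 2) :
    ∫ p, (loss01 (fun x => 2 * g x - 1) p - loss01 D.regr p) ∂D.P ≤
      t * D.Q.real {x | |D.regr x| ≤ t} := by
  have hg' : Measurable fun x => 2 * g x - 1 := (hg.const_mul 2).sub_const 1
  rw [D.integral_loss01_sub hg', ← D.integral_margin]
  refine integral_mono_ae (D.integrable_abs_regr_mul_disagree hg') (D.integrable_margin t) ?_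
  filter_upwards [happrox] with x hx
  have hnn : 0 ≤ {x | |D.regr x| ≤ t}.indicator (fun _ => t) x :=
    indicator_nonneg (fun _ _ => ht.le) x
  by_cases hs : sgn (2 * g x - 1) = sgn (D.regr x)
  · simpa [disagree, hs] using hnn
  · have hle : |D.regr x| ≤ t := by
      rw [abs_le] at hx ⊢
      have hregr : D.regr x = 2 * D.η x - 1 := rfl
      by_cases h₁ : 0 ≤ 2 * g x - 1 <;> by_cases h₂ : 0 ≤ D.regr x
      · exact absurd (by rw [sgn, sgn, if_pos h₁, if_pos h₂]) hs
      · constructor <;> linarith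
      · constructor <;> linarith
      · exact absurd (by rw [sgn, sgn, if_neg h₁, if_neg h₂]) hs
    rw [indicator_of_mem (by exact hle)]
    simpa [disagree, hs] using hle

end DataDist

/-- Empirical risk minimization over a finite family of plug-in classifiers. -/
theorem exists_estimator_le {d n : ℕ} (hn : 0 < n) {ι : Type*} [Fintype ι] [Nonempty ι]
    {g : ι → (Fin d → ℝ) → ℝ} (hg : ∀ i, Measurable (g i)) :
    ∃ A : Estimator d n, A.Meas ∧ ∀ (D : DataDist d) (t : ℝ), 0 < t → t ≤ 1 →
      (∃ i, ∀ᵐ x ∂D.Q, |D.η x - g i x| ≤ t / 2) →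
      expectedExcess01 D.P A ≤ 3 * (t * D.Q.real {x | |D.regr x| ≤ t}) +
        4 * (Real.log (Fintype.card ι) / (t * n)) := by
  set G : ι → (Fin d → ℝ) → ℝ := fun i x => 2 * g i x - 1 with hGdef
  have hG : ∀ i, Measurable (G i) := fun i => ((hg i).const_mul 2).sub_const 1
  have hemp : ∀ i, Measurable fun ω : Fin n → (Fin d → ℝ) × ℝ => ∑ k, loss01 (G i) (ω k) :=
    fun i => Finset.measurable_sum _ fun k _ =>
      (measurable_loss01 (hG i)).comp (measurable_pi_apply k)
  obtain ⟨s, hs, hmin⟩ := exists_measurable_argmin hemp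
  refine ⟨fun ω => G (s ω), ?_, fun D t ht ht1 ⟨i₀, hi₀⟩ => ?_⟩
  · let _ : MeasurableSpace ι := ⊤
    exact measurable_selection (s := fun p : (Fin n → (Fin d → ℝ) × ℝ) × (Fin d → ℝ) => s p.1)
      (hs.comp measurable_fst) hG measurable_snd
  · have hn0 : (0 : ℝ) < n := by exact_mod_cast hn
    have hsel := integral_selection_le (μ := D.P) hn
      (Z := fun i p => loss01 (G i) p - loss01 D.regr p)
      (fun i => (measurable_loss01 (hG i)).sub (measurable_loss01 D.measurable_regr))
      (fun i p => abs_loss01_sub_le _ _ p) (half_pos ht) (by linarith)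
      (a := t * D.Q.real {x | |D.regr x| ≤ t})
      (fun i => by linarith [D.mul_integral_loss01_sub_sq_le (hG i) ht]) hs i₀
      (fun ω => by
        simp only [Finset.sum_sub_distrib]
        linarith [hmin ω i₀])
    have happ := D.integral_loss01_sub_le (hg i₀) ht hi₀
    have hle : expectedExcess01 D.P (fun ω => G (s ω) : Estimator d n) ≤
        ∫ ω, (∫ p, (loss01 (G (s ω)) p - loss01 D.regr p) ∂D.P)
          ∂(Measure.pi fun _ : Fin n => D.P) := by
      change ∫ ω, excess01 D.P (G (s ω)) ∂iid D.P n ≤ _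
      rw [iid_eq_pi]
      exact integral_mono (integrable_comp_finite hs fun i => excess01 D.P (G i))
        (integrable_comp_finite hs fun i => ∫ p, (loss01 (G i) p - loss01 D.regr p) ∂D.P)
        fun ω => D.excess01_le (hG _)
    have hdiv : 2 * Real.log (Fintype.card ι) / (t / 2 * n) =
        4 * (Real.log (Fintype.card ι) / (t * n)) := by
      field_simp
      ring
    rw [hdiv] at hsel
    exact hle.trans (by linarith)

/-! ## Rates -/

theorem rateExp_eq {dstar : ℕ} {e : ℝ} (he : 0 < e) {s : ℝ≥0∞} (hs : s ≠ ∞) :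
    rateExp dstar e s = (s.toReal + 1) / (dstar / e + s.toReal + 2) := by
  have h₁ : 0 < s.toReal + 1 := by positivity
  have h₂ : 0 < (dstar : ℝ) / e + s.toReal + 2 := by positivity
  have h₃ : 0 < (dstar : ℝ) / (s.toReal + 1) + (1 + 1 / (s.toReal + 1)) * e := by positivity
  rw [rateExp, if_neg hs, div_eq_div_iff h₃.ne' h₂.ne']
  field_simp
  ring

/-- The choice of the scale `t` balancing approximation and estimation errors. -/
theorem exists_balanced_scale {x T ρ σ : ℝ} (hx : 0 < x) (hx1 : x ≤ 1) (hT : 0 < T) (hT1 : T ≤ 1)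
    (hρ : 0 ≤ ρ) (hσ : 0 ≤ σ) :
    ∃ t, 0 < t ∧ t ≤ T ∧ t ^ (σ + 1) ≤ x ^ ((σ + 1) / (ρ + σ + 2)) ∧
      t ^ (-(ρ + 1)) * x ≤ T ^ (-(ρ + 1)) * x ^ ((σ + 1) / (ρ + σ + 2)) := by
  have hden : 0 < ρ + σ + 2 := by positivity
  set t₀ := x ^ (1 / (ρ + σ + 2)) with ht₀def
  have ht₀ : 0 < t₀ := Real.rpow_pos_of_pos hx _
  have hpow : t₀ ^ (σ + 1) = x ^ ((σ + 1) / (ρ + σ + 2)) := by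
    rw [ht₀def, ← Real.rpow_mul hx.le]
    congr 1
    ring
  refine ⟨min t₀ T, lt_min ht₀ hT, min_le_right _ _, ?_, ?_⟩
  · rw [← hpow]
    exact Real.rpow_le_rpow (lt_min ht₀ hT).le (min_le_left _ _) (by positivity)
  · rcases le_total t₀ T with h | h
    · have : t₀ ^ (-(ρ + 1)) * x = x ^ ((σ + 1) / (ρ + σ + 2)) := by
        rw [ht₀def, ← Real.rpow_mul hx.le, ← Real.rpow_add_one hx.ne']
        congr 1
        field_simp
        ring
      rw [min_eq_left h, this]
      refine le_mul_of_one_le_left (Real.rpow_nonneg hx.le _) ?_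
      exact Real.one_le_rpow_of_pos_of_le_one_of_nonpos hT hT1 (by linarith)
    · rw [min_eq_right h]
      refine mul_le_mul_of_nonneg_left ?_ (Real.rpow_nonneg hT.le _)
      nth_rewrite 1 [← Real.rpow_one x]
      refine Real.rpow_le_rpow_of_exponent_ge hx hx1 ?_
      rw [div_le_one hden]
      linarith

/-- Theorem 3.3 : an estimator achieving the minimax rate. -/
theorem statement_4
    (d q K dmax dstar : ℕ) (hd : 0 < d) (hK : 0 < K) (hdmax : 0 < dmax) (hdstar : 0 < dstar)
    (β r α : ℝ) (hβ : 0 < β) (hr : 0 < r) (hα : 0 < α) (τ : ℝ≥0∞) (hτ : 0 < τ)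
    (h1 : dstar ≤ d) (h2 : dstar * q ≤ K * q) (h3 : ¬(α < 1 ∧ 1 ≤ τ)) :
    ∃ c6 : ℝ, 0 < c6 ∧
      ∀ (s : ℝ≥0∞) (n : ℕ), 0 < n →
        ∃ A : Estimator d n, A.Meas ∧
          (⨆ D : ↥(HCHOM d q K dstar dmax β r ∩ Tsybakov d s α τ),
              expectedExcess01 D.1.P A) ≤
            c6 * (1 / n : ℝ) ^ rateExp dstar (β * min 1 β ^ q) s := by
  obtain ⟨C, hC, hnet⟩ := GCHOM.hasNet K dmax hdstar hβ hr q d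
  set e := β * min 1 β ^ q with he_def
  have he : 0 < e := mul_pos hβ (pow_pos (lt_min one_pos hβ) q)
  set ρ : ℝ := dstar / e with hρ_def
  have hρ : 0 ≤ ρ := by positivity
  obtain ⟨T, hT, hT1, hTτ⟩ : ∃ T : ℝ, 0 < T ∧ T < 1 ∧ ENNReal.ofReal T ≤ τ := by
    obtain ⟨T, hT, hTτ⟩ := ENNReal.lt_iff_exists_real_btwn.1 (lt_min hτ one_pos)
    refine ⟨T, ENNReal.ofReal_pos.1 hTτ.1, ?_, hTτ.2.le.trans (min_le_left _ _)⟩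
    exact ENNReal.ofReal_lt_one.1 (hTτ.2.trans_le (min_le_right _ _))
  set B := 4 * C * (2 : ℝ) ^ ρ with hB_def
  have hB : 0 ≤ B := by positivity
  have key : ∀ (s : ℝ≥0∞) (n : ℕ), 0 < n → ∀ t, 0 < t → t ≤ T →
      ∃ A : Estimator d n, A.Meas ∧
        ∀ D ∈ HCHOM d q K dstar dmax β r ∩ Tsybakov d s α τ,
          expectedExcess01 D.P A ≤
            3 * (t * (α * (rpowE (ENNReal.ofReal t) s).toReal)) + B * (t ^ (-(ρ + 1)) * (1 / n)) := by
    intro s n hn t ht htT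
    have hn0 : (0 : ℝ) < n := by exact_mod_cast hn
    obtain ⟨ι, _, _, g, hg, hlog, hcover⟩ := hnet (t / 2) (half_pos ht) (by linarith)
    obtain ⟨A, hA, hbound⟩ := exists_estimator_le hn hg
    refine ⟨A, hA, fun D hD => ?_⟩
    obtain ⟨⟨f, hf, hηf⟩, hTs⟩ := hD
    obtain ⟨i, hi⟩ := hcover f hf
    refine (hbound D t ht (by linarith) ⟨i, ?_⟩).trans (add_le_add ?_ ?_)
    · filter_upwards [hηf, D.ae_mem_cube] with x hx hxc
      rw [hx]
      exact hi x hxc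
    · have hm := hTs t ht ((ENNReal.ofReal_le_ofReal htT).trans hTτ)
      rw [measure_inter_conull (t := cube d) D.ae_mem_cube] at hm
      have hfin : rpowE (ENNReal.ofReal t) s ≠ ∞ := by
        have : ENNReal.ofReal t < 1 := ENNReal.ofReal_lt_one.2 (by linarith)
        unfold rpowE
        split_ifs
        · simp
        · exact ENNReal.rpow_ne_top_of_nonneg ENNReal.toReal_nonneg ENNReal.ofReal_ne_top
      have := ENNReal.toReal_mono (ENNReal.mul_ne_top ENNReal.ofReal_ne_top hfin) hm
      rw [ENNReal.toReal_mul, ENNReal.toReal_ofReal hα.le] at this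
      exact mul_le_mul_of_nonneg_left (mul_le_mul_of_nonneg_left this ht.le) (by norm_num)
    · have hpow : (t / 2) ^ (-ρ) / t = (2 : ℝ) ^ ρ * t ^ (-(ρ + 1)) := by
        rw [Real.div_rpow ht.le zero_le_two, Real.rpow_neg zero_le_two, div_inv_eq_mul,
          neg_add, Real.rpow_add ht, Real.rpow_neg_one]
        ring
      calc 4 * (Real.log (Fintype.card ι) / (t * n))
          ≤ 4 * (C * (t / 2) ^ (-ρ) / (t * n)) := by gcongr
        _ = 4 * C * ((t / 2) ^ (-ρ) / t) * (1 / n) := by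
            field_simp
        _ = B * (t ^ (-(ρ + 1)) * (1 / n)) := by
            rw [hpow, hB_def]
            ring
  have hTρ : 0 < T ^ (-(ρ + 1)) := Real.rpow_pos_of_pos hT _
  refine ⟨3 * α + B * T ^ (-(ρ + 1)), by positivity, fun s n hn => ?_⟩
  have hn0 : (0 : ℝ) < n := by exact_mod_cast hn
  have hx : (0 : ℝ) < 1 / n := by positivity
  have hx1 : (1 / n : ℝ) ≤ 1 := (div_le_one hn0).2 (by exact_mod_cast hn)
  have hrhs : 0 ≤ (3 * α + B * T ^ (-(ρ + 1))) * (1 / n : ℝ) ^ rateExp dstar e s := by positivity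
  by_cases hs : s = ∞
  · obtain ⟨A, hA, hbound⟩ := key s n hn T hT le_rfl
    refine ⟨A, hA, Real.iSup_le (fun D => (hbound D.1 D.2).trans ?_) hrhs⟩
    have hzero : rpowE (ENNReal.ofReal T) s = 0 := by
      rw [rpowE, if_pos hs, if_pos (ENNReal.ofReal_lt_one.2 hT1)]
    rw [hzero, rateExp, if_pos hs, Real.rpow_one, ENNReal.toReal_zero, mul_zero, mul_zero,
      mul_zero, zero_add, add_mul, ← mul_assoc]
    exact le_add_of_nonneg_left (by positivity)
  · obtain ⟨t, ht, htT, hbias, hvar⟩ :=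
      exists_balanced_scale hx hx1 hT hT1.le hρ (ENNReal.toReal_nonneg (a := s))
    rw [← rateExp_eq he hs] at hbias hvar
    obtain ⟨A, hA, hbound⟩ := key s n hn t ht htT
    refine ⟨A, hA, Real.iSup_le (fun D => (hbound D.1 D.2).trans ?_) hrhs⟩
    have hval : t * (rpowE (ENNReal.ofReal t) s).toReal = t ^ (s.toReal + 1) := by
      rw [rpowE, if_neg hs, ← ENNReal.toReal_rpow, ENNReal.toReal_ofReal ht.le, Real.rpow_add ht,
        Real.rpow_one, mul_comm]
    calc 3 * (t * (α * (rpowE (ENNReal.ofReal t) s).toReal)) + B * (t ^ (-(ρ + 1)) * (1 / n))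
        = 3 * α * t ^ (s.toReal + 1) + B * (t ^ (-(ρ + 1)) * (1 / n)) := by
          rw [← hval]
          ring
      _ ≤ 3 * α * (1 / n : ℝ) ^ rateExp dstar e s +
          B * (T ^ (-(ρ + 1)) * (1 / n : ℝ) ^ rateExp dstar e s) := by gcongr
      _ = _ := by ring

end ZZS
end
end

section
/- Let d ∈ ℕ, q ∈ ℕ∪{0}, K, d⋆, d* ∈ ℕ, β, r ∈ (0,∞), with d* ≤ d and d*·q ≤ K·q. Set e := β·(min{1,β})^q. Then there exists a constant c ∈ (0,∞) depending only on (d,q,K,d⋆,d*,β,r) such that for all γ ∈ (0,1]: log N(G^CHOM_d(q,K,d⋆,d*,β,r), γ) ≤ c·(1/γ)^{d*/e}. -/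
open MeasureTheory ENNReal Set

noncomputable section

namespace ZZS

/-! ## Cell decompositions of function classes -/

/-- The class `F` splits into at most `exp T` cells of uniform diameter at most `ε` over `Ω`. -/
def HasCells {X : Type} (Ω : Set X) (F : Set (X → ℝ)) (T ε : ℝ) : Prop :=
  ∃ (ι : Type) (_ : Fintype ι) (idx : F → ι), (Fintype.card ι : ℝ) ≤ Real.exp T ∧
    ∀ f g : F, idx f = idx g → ∀ x ∈ Ω, |f.1 x - g.1 x| ≤ ε

theorem HasCells.mono {X : Type} {Ω : Set X} {F G : Set (X → ℝ)} {T T' ε ε' : ℝ}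
    (h : HasCells Ω F T ε) (hGF : G ⊆ F) (hT : T ≤ T') (hε : ε ≤ ε') : HasCells Ω G T' ε' := by
  obtain ⟨ι, _, idx, hc, h⟩ := h
  exact ⟨ι, inferInstance, fun f => idx ⟨f.1, hGF f.2⟩, hc.trans (Real.exp_le_exp.2 hT),
    fun f g hfg x hx => (h _ _ hfg x hx).trans hε⟩

theorem HasCells.coveringNumber_le {X : Type} {Ω : Set X} {F : Set (X → ℝ)} {T ε : ℝ}
    (h : HasCells Ω F T ε) : coveringNumber Ω F ε ≤ ENNReal.ofReal (Real.exp T) := by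
  classical
  obtain ⟨ι, _, idx, hc, h⟩ := h
  let rep : Set.range idx → F := fun i => i.2.choose
  have hrep : ∀ i, idx (rep i) = i.1 := fun i => i.2.choose_spec
  let A : Finset (X → ℝ) := Finset.univ.image fun i => (rep i).1
  have hA : (A.card : ℝ) ≤ Real.exp T := by
    refine le_trans ?_ hc
    have h1 : A.card ≤ Fintype.card (Set.range idx) := Finset.card_image_le
    exact_mod_cast h1.trans (Fintype.card_subtype_le _)
  have hAF : (A : Set (X → ℝ)) ⊆ F := by
    intro f hf
    simp only [A, Finset.coe_image, Set.mem_image] at hf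
    obtain ⟨i, -, rfl⟩ := hf
    exact (rep i).2
  have hcov : ∀ f ∈ F, ∃ g ∈ A, ∀ x ∈ Ω, |f x - g x| ≤ ε := by
    intro f hf
    let i : Set.range idx := ⟨idx ⟨f, hf⟩, ⟨f, hf⟩, rfl⟩
    exact ⟨(rep i).1, Finset.mem_image_of_mem _ (Finset.mem_univ i), h ⟨f, hf⟩ (rep i) (hrep i).symm⟩
  refine (iInf₂_le A ⟨hAF, hcov⟩).trans ?_
  rw [← ENNReal.ofReal_natCast]
  exact ENNReal.ofReal_le_ofReal hA

theorem HasCells.iUnion {X τ : Type} [Fintype τ] {Ω : Set X} {F : τ → Set (X → ℝ)} {T ε : ℝ}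
    (h : ∀ j, HasCells Ω (F j) T ε) :
    HasCells Ω (⋃ j, F j) (Fintype.card τ + T) ε := by
  choose ι hι idx hc h using h
  have hmem : ∀ f : ↥(⋃ j, F j), ∃ j, f.1 ∈ F j := fun f => Set.mem_iUnion.1 f.2
  choose k hk using hmem
  refine ⟨Σ j, ι j, inferInstance, fun f => ⟨k f, idx (k f) ⟨f.1, hk f⟩⟩, ?_, ?_⟩
  · rw [Fintype.card_sigma, Real.exp_add]
    push_cast
    calc ∑ j, (Fintype.card (ι j) : ℝ) ≤ ∑ _j : τ, Real.exp T := Finset.sum_le_sum fun j _ => hc j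
      _ = Fintype.card τ * Real.exp T := by simp
      _ ≤ _ := by
        gcongr
        linarith [Real.add_one_le_exp (Fintype.card τ : ℝ)]
  · intro f g hfg x hx
    have key : ∀ i j (hf : f.1 ∈ F i) (hg : g.1 ∈ F j),
        (⟨i, idx i ⟨f.1, hf⟩⟩ : Σ j, ι j) = ⟨j, idx j ⟨g.1, hg⟩⟩ → |f.1 x - g.1 x| ≤ ε := by
      intro i j hf hg e
      obtain ⟨rfl, e⟩ := Sigma.mk.inj_iff.1 e
      exact h i _ _ (eq_of_heq e) x hx
    exact key _ _ (hk f) (hk g) hfg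

theorem hasCells_of_eqOn {X : Type} {Ω : Set X} {F : Set (X → ℝ)} {ε : ℝ} (hε : 0 ≤ ε)
    (h : ∀ f ∈ F, ∀ g ∈ F, ∀ x ∈ Ω, f x = g x) : HasCells Ω F 0 ε :=
  ⟨Unit, inferInstance, fun _ => (), by simp, fun f g _ x hx => by
    rw [h f.1 f.2 g.1 g.2 x hx]; simpa using hε⟩

theorem HasCells.comp {X Y : Type} {Ω : Set X} {Ω' : Set Y} {F : Set (X → ℝ)} {G : Set (Y → ℝ)}
    {T ε : ℝ} (h : HasCells Ω' G T ε) (p : X → Y) (hp : ∀ x ∈ Ω, p x ∈ Ω')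
    (hF : ∀ f ∈ F, ∃ g ∈ G, ∀ x ∈ Ω, f x = g (p x)) : HasCells Ω F T ε := by
  obtain ⟨ι, _, idx, hc, h⟩ := h
  choose w hw hfw using fun f : F => hF f.1 f.2
  refine ⟨ι, inferInstance, fun f => idx ⟨w f, hw f⟩, hc, fun f g hfg x hx => ?_⟩
  rw [hfw f x hx, hfw g x hx]
  exact h _ _ hfg _ (hp x hx)

/-! ## One-dimensional Hölder classes -/

/-- Functions on `(0,1)` with `k` derivatives, the last one being `α`-Hölder with constant `L`. -/
def lineHolder (k : ℕ) (α L : ℝ) : Set (ℝ → ℝ) :=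
  {φ | ∃ D : ℕ → ℝ → ℝ, D 0 = φ ∧
    (∀ j < k, ∀ t ∈ Ioo (0 : ℝ) 1, HasDerivAt (D j) (D (j + 1) t) t) ∧
    ∀ s ∈ Ioo (0 : ℝ) 1, ∀ t ∈ Ioo (0 : ℝ) 1, |D k s - D k t| ≤ L * |s - t| ^ α}

/-- A bounded function has somewhere a controlled `j`-th derivative. -/
theorem exists_abs_deriv_le (j : ℕ) : ∀ (l B : ℝ), 0 < l → 0 ≤ B → ∃ C : ℝ, 0 ≤ C ∧
    ∀ (D : ℕ → ℝ → ℝ) (a : ℝ),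
      (∀ i < j, ∀ t ∈ Ioo a (a + l), HasDerivAt (D i) (D (i + 1) t) t) →
      (∀ t ∈ Ioo a (a + l), |D 0 t| ≤ B) → ∃ t ∈ Ioo a (a + l), |D j t| ≤ C := by
  induction j with
  | zero =>
    intro l B hl hB
    refine ⟨B, hB, fun D a _ h => ⟨a + l / 2, ?_, h _ ?_⟩⟩ <;> constructor <;> linarith
  | succ j ih =>
    intro l B hl hB
    obtain ⟨C, hC, h⟩ := ih (l / 3) B (by positivity) hB
    refine ⟨2 * C / (l / 3), by positivity, fun D a hD h0 => ?_⟩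
    have hsub : ∀ b, a ≤ b → b + l / 3 ≤ a + l → Ioo b (b + l / 3) ⊆ Ioo a (a + l) :=
      fun b h1 h2 => Ioo_subset_Ioo h1 h2
    have hs1 := hsub a le_rfl (by linarith)
    have hs2 := hsub (a + 2 * l / 3) (by linarith) (by linarith)
    obtain ⟨s, hs, hsC⟩ := h D a (fun i hi t ht => hD i (by omega) t (hs1 ht))
      fun t ht => h0 t (hs1 ht)
    obtain ⟨t, ht, htC⟩ := h D (a + 2 * l / 3) (fun i hi t ht => hD i (by omega) t (hs2 ht))
      fun t ht => h0 t (hs2 ht)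
    have hst : s + l / 3 < t := by linarith [hs.2, ht.1]
    have hIcc : Icc s t ⊆ Ioo a (a + l) := fun u hu =>
      ⟨(hs1 hs).1.trans_le hu.1, hu.2.trans_lt (hs2 ht).2⟩
    obtain ⟨u, hu, hslope⟩ := exists_hasDerivAt_eq_slope (D j) (D (j + 1)) (a := s) (b := t)
      (by linarith)
      (fun u hu => (hD j (by omega) u (hIcc hu)).continuousAt.continuousWithinAt)
      (fun u hu => hD j (by omega) u (hIcc (Ioo_subset_Icc_self hu)))
    refine ⟨u, hIcc (Ioo_subset_Icc_self hu), ?_⟩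
    rw [hslope, abs_div, abs_of_pos (a := t - s) (by linarith)]
    have : |D j t - D j s| ≤ 2 * C := (abs_sub _ _).trans (by linarith)
    gcongr
    linarith

theorem abs_sub_le_of_hasDerivAt {f f' : ℝ → ℝ} {C : ℝ}
    (hf : ∀ t ∈ Ioo (0 : ℝ) 1, HasDerivAt f (f' t) t) (hC : ∀ t ∈ Ioo (0 : ℝ) 1, |f' t| ≤ C)
    {s t : ℝ} (hs : s ∈ Ioo (0 : ℝ) 1) (ht : t ∈ Ioo (0 : ℝ) 1) : |f s - f t| ≤ C * |s - t| :=
  (convex_Ioo (0 : ℝ) 1).norm_image_sub_le_of_norm_hasDerivWithin_le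
    (fun x hx => (hf x hx).hasDerivWithinAt) hC ht hs

/-- The first derivative is controlled by the supremum and the oscillation of a higher one. -/
theorem exists_forall_abs_deriv_le (k : ℕ) : ∀ L B : ℝ, 0 ≤ L → 0 ≤ B → ∃ C : ℝ, 0 ≤ C ∧
    ∀ D : ℕ → ℝ → ℝ,
      (∀ i < k + 1, ∀ t ∈ Ioo (0 : ℝ) 1, HasDerivAt (D i) (D (i + 1) t) t) →
      (∀ t ∈ Ioo (0 : ℝ) 1, |D 0 t| ≤ B) →
      (∀ s ∈ Ioo (0 : ℝ) 1, ∀ t ∈ Ioo (0 : ℝ) 1, |D (k + 1) s - D (k + 1) t| ≤ L) →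
      ∀ t ∈ Ioo (0 : ℝ) 1, |D 1 t| ≤ C := by
  have top : ∀ k : ℕ, ∀ L B : ℝ, 0 ≤ L → 0 ≤ B → ∃ C : ℝ, 0 ≤ C ∧ ∀ D : ℕ → ℝ → ℝ,
      (∀ i < k + 1, ∀ t ∈ Ioo (0 : ℝ) 1, HasDerivAt (D i) (D (i + 1) t) t) →
      (∀ t ∈ Ioo (0 : ℝ) 1, |D 0 t| ≤ B) →
      (∀ s ∈ Ioo (0 : ℝ) 1, ∀ t ∈ Ioo (0 : ℝ) 1, |D (k + 1) s - D (k + 1) t| ≤ L) →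
      ∀ t ∈ Ioo (0 : ℝ) 1, |D (k + 1) t| ≤ C := by
    intro k L B hL hB
    obtain ⟨C, hC, h⟩ := exists_abs_deriv_le (k + 1) 1 B one_pos hB
    refine ⟨C + L, by positivity, fun D hD h0 hosc t ht => ?_⟩
    obtain ⟨s, hs, hsC⟩ := h D 0 (by simpa using hD) (by simpa using h0)
    rw [zero_add] at hs
    have := abs_sub_abs_le_abs_sub (D (k + 1) t) (D (k + 1) s)
    linarith [hosc t ht s hs]
  induction k with
  | zero => exact top 0
  | succ k ih =>
    intro L B hL hB
    obtain ⟨C, hC, h⟩ := top (k + 1) L B hL hB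
    obtain ⟨C', hC', h'⟩ := ih C B hC hB
    refine ⟨C', hC', fun D hD h0 hosc => h' D (fun i hi => hD i (by omega)) h0 ?_⟩
    intro s hs t ht
    refine (abs_sub_le_of_hasDerivAt (hD (k + 1) (by omega)) (h D hD h0 hosc) hs ht).trans ?_
    have : |s - t| ≤ 1 := abs_le.2 ⟨by linarith [hs.1, ht.2], by linarith [hs.2, ht.1]⟩
    exact mul_le_of_le_one_right hC this

/-- The modulus of continuity exponent of a function with an `α`-Hölder `k`-th derivative. -/
def modExp (k : ℕ) (α : ℝ) : ℝ := if k = 0 then α else 1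

theorem modExp_pos {k : ℕ} {α : ℝ} (hα : 0 < α) : 0 < modExp k α := by
  unfold modExp; split_ifs <;> simp [hα]

theorem lineHolder_modulus (k : ℕ) {α L B : ℝ} (hα : 0 < α) (hL : 0 ≤ L) (hB : 0 ≤ B) :
    ∃ C : ℝ, 0 ≤ C ∧ ∀ φ ∈ lineHolder k α L, (∀ t ∈ Ioo (0 : ℝ) 1, |φ t| ≤ B) →
      ∀ s ∈ Ioo (0 : ℝ) 1, ∀ t ∈ Ioo (0 : ℝ) 1, |φ s - φ t| ≤ C * |s - t| ^ modExp k α := by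
  rcases k with _ | k
  · refine ⟨L, hL, ?_⟩
    rintro φ ⟨D, rfl, -, h⟩ -
    simpa [modExp] using h
  · obtain ⟨C, hC, h⟩ := exists_forall_abs_deriv_le k L B hL hB
    refine ⟨C, hC, ?_⟩
    rintro φ ⟨D, rfl, hD, hosc⟩ hb s hs t ht
    have hexp : modExp (k + 1) α = 1 := by simp [modExp]
    rw [hexp, Real.rpow_one]
    refine abs_sub_le_of_hasDerivAt (hD 0 (by omega)) (h D hD hb ?_) hs ht
    intro s hs t ht
    have h1 : |s - t| ≤ 1 := abs_le.2 ⟨by linarith [hs.1, ht.2], by linarith [hs.2, ht.1]⟩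
    refine (hosc s hs t ht).trans (mul_le_of_le_one_right hL ?_)
    exact Real.rpow_le_one (abs_nonneg _) h1 hα.le

theorem lineHolder_rescale {k : ℕ} {α L a h ε : ℝ} {φ ψ : ℝ → ℝ}
    (hφ : φ ∈ lineHolder k α L) (hψ : ψ ∈ lineHolder k α L) (ha : 0 ≤ a) (hh : 0 < h)
    (hah : a + h ≤ 1) (hε : 0 < ε) (hLε : 2 * L * (h ^ k * h ^ α) ≤ ε) :
    (fun t => (φ (a + h * t) - ψ (a + h * t)) / ε) ∈ lineHolder k α 1 := by
  obtain ⟨D, rfl, hD, hDk⟩ := hφ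
  obtain ⟨E, rfl, hE, hEk⟩ := hψ
  have hmem : ∀ t ∈ Ioo (0 : ℝ) 1, a + h * t ∈ Ioo (0 : ℝ) 1 := fun t ht =>
    ⟨by nlinarith [mul_pos hh ht.1], by nlinarith [ht.2]⟩
  refine ⟨fun j t => h ^ j * (D j (a + h * t) - E j (a + h * t)) / ε, by simp, ?_, ?_⟩
  · intro j hj t ht
    have hlin : HasDerivAt (fun t : ℝ => a + h * t) h t := by
      simpa using ((hasDerivAt_id t).const_mul h).const_add a
    have h1 := (hD j hj _ (hmem t ht)).comp t hlin
    have h2 := (hE j hj _ (hmem t ht)).comp t hlin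
    refine (((h1.sub h2).const_mul (h ^ j)).div_const ε).congr_deriv ?_
    ring
  · intro s hs t ht
    have e : |(a + h * s) - (a + h * t)| = h * |s - t| := by
      rw [add_sub_add_left_eq_sub, ← mul_sub, abs_mul, abs_of_pos hh]
    have h1 := hDk _ (hmem s hs) _ (hmem t ht)
    have h2 := hEk _ (hmem s hs) _ (hmem t ht)
    rw [e, Real.mul_rpow hh.le (abs_nonneg _)] at h1 h2
    have h3 := abs_sub (D k (a + h * s) - D k (a + h * t)) (E k (a + h * s) - E k (a + h * t))
    rw [← sub_div, abs_div, abs_of_pos hε, div_le_iff₀ hε, ← mul_sub, abs_mul,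
      abs_of_pos (pow_pos hh k)]
    have hk := pow_pos hh k
    have hp : 0 ≤ |s - t| ^ α := by positivity
    calc h ^ k * |D k (a + h * s) - E k (a + h * s) - (D k (a + h * t) - E k (a + h * t))|
        = h ^ k * |D k (a + h * s) - D k (a + h * t) - (E k (a + h * s) - E k (a + h * t))| := by
          congr 2; ring
      _ ≤ h ^ k * (2 * (L * (h ^ α * |s - t| ^ α))) := by gcongr; linarith
      _ = 2 * L * (h ^ k * h ^ α) * |s - t| ^ α := by ring
      _ ≤ ε * |s - t| ^ α := by gcongr
      _ = _ := by ring

/-! ## Classes of functions that are Hölder smooth along the coordinate directions -/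

theorem mem_cubeo {m : ℕ} {x : Fin m → ℝ} : x ∈ cubeo m ↔ ∀ i, x i ∈ Ioo (0 : ℝ) 1 := by
  simp [cubeo, Set.mem_pi]

theorem mem_cube {m : ℕ} {x : Fin m → ℝ} : x ∈ cube m ↔ ∀ i, x i ∈ Icc (0 : ℝ) 1 := by
  simp only [cube, Set.mem_pi, Set.mem_univ, true_imp_iff]

theorem update_mem_cubeo {m : ℕ} {x : Fin m → ℝ} (hx : x ∈ cubeo m) (i : Fin m) {t : ℝ}
    (ht : t ∈ Ioo (0 : ℝ) 1) : Function.update x i t ∈ cubeo m := by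
  rw [mem_cubeo] at *
  intro j
  by_cases hj : j = i
  · subst hj; simpa using ht
  · simpa [hj] using hx j

/-- Functions bounded by `B` on the open cube whose restrictions to lines parallel to the
coordinate axes lie in `lineHolder k α L`. -/
def coordHolder (m k : ℕ) (α L B : ℝ) : Set ((Fin m → ℝ) → ℝ) :=
  {f | (∀ i, ∀ x ∈ cubeo m, (fun t => f (Function.update x i t)) ∈ lineHolder k α L) ∧
    ∀ x ∈ cubeo m, |f x| ≤ B}

theorem coordHolder_modulus (m k : ℕ) {α L B : ℝ} (hα : 0 < α) (hL : 0 ≤ L) (hB : 0 ≤ B) :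
    ∃ C : ℝ, 0 ≤ C ∧ ∀ f ∈ coordHolder m k α L B, ∀ x ∈ cubeo m, ∀ z ∈ cubeo m, ∀ s : ℝ,
      (∀ i, |x i - z i| ≤ s) → |f x - f z| ≤ C * s ^ modExp k α := by
  obtain ⟨C, hC, h⟩ := lineHolder_modulus k hα hL hB
  refine ⟨m * C, by positivity, ?_⟩
  rintro f ⟨hf, hb⟩ x hx z hz s hs
  have key : ∀ S : Finset (Fin m), S.piecewise z x ∈ cubeo m ∧
      |f x - f (S.piecewise z x)| ≤ S.card * (C * s ^ modExp k α) := by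
    intro S
    induction S using Finset.induction_on with
    | empty => simpa using hx
    | insert i S hi ih =>
      obtain ⟨hmem, hle⟩ := ih
      have hmem' : (insert i S).piecewise z x ∈ cubeo m := by
        rw [Finset.piecewise_insert]
        exact update_mem_cubeo hmem i (mem_cubeo.1 hz i)
      refine ⟨hmem', ?_⟩
      have h1 := h _ (hf i _ hmem) (fun t ht => hb _ (update_mem_cubeo hmem i ht))
        (x i) (mem_cubeo.1 hx i) (z i) (mem_cubeo.1 hz i)
      have e : Function.update (S.piecewise z x) i (x i) = S.piecewise z x := by
        conv_lhs => rw [← Finset.piecewise_eq_of_notMem S z x hi]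
        exact Function.update_eq_self _ _
      simp only [e] at h1
      rw [← Finset.piecewise_insert] at h1
      have h2 : C * |x i - z i| ^ modExp k α ≤ C * s ^ modExp k α := by
        gcongr
        · exact (modExp_pos hα).le
        · exact hs i
      have h3 := abs_sub_le (f x) (f (S.piecewise z x)) (f ((insert i S).piecewise z x))
      rw [Finset.card_insert_of_notMem hi]
      push_cast
      linarith
  have := (key Finset.univ).2
  simpa [mul_assoc] using this

theorem exists_hasCells_coordHolder (m k : ℕ) {α ε : ℝ} (hα : 0 < α) (hε : 0 < ε) :
    ∃ T : ℝ, 0 ≤ T ∧ HasCells (cubeo m) (coordHolder m k α 1 1) T ε := by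
  obtain ⟨C, hC, h⟩ := coordHolder_modulus m k hα zero_le_one (zero_le_one' ℝ)
  have ha := modExp_pos (k := k) hα
  obtain ⟨N, hN⟩ : ∃ N : ℕ, C * (1 / ((N : ℝ) + 1)) ^ modExp k α < ε / 4 := by
    have h1 : Filter.Tendsto (fun N : ℕ => C * (1 / ((N : ℝ) + 1)) ^ modExp k α)
        Filter.atTop (nhds (C * 0 ^ modExp k α)) :=
      (tendsto_one_div_add_atTop_nhds_zero_nat.rpow_const (Or.inr ha.le)).const_mul C
    rw [Real.zero_rpow ha.ne', mul_zero] at h1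
    exact (h1.eventually (gt_mem_nhds (by positivity))).exists
  let A := Fin m → Fin (N + 1)
  let y : A → Fin m → ℝ := fun a i => ((a i : ℕ) + 1 / 2) / ((N : ℝ) + 1)
  have hN0 : (0 : ℝ) < (N : ℝ) + 1 := by positivity
  have hy : ∀ a, y a ∈ cubeo m := by
    intro a
    refine mem_cubeo.2 fun i => ⟨by positivity, ?_⟩
    have : ((a i : ℕ) : ℝ) + 1 ≤ N + 1 := by exact_mod_cast (a i).2
    rw [div_lt_one hN0]
    linarith
  have hnear : ∀ x ∈ cubeo m, ∃ a, ∀ i, |x i - y a i| ≤ 1 / ((N : ℝ) + 1) := by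
    intro x hx
    rw [mem_cubeo] at hx
    have hlt : ∀ i, ⌊x i * (N + 1)⌋₊ < N + 1 := by
      intro i
      rw [Nat.floor_lt (mul_nonneg (hx i).1.le hN0.le)]
      push_cast
      exact mul_lt_of_lt_one_left hN0 (hx i).2
    refine ⟨fun i => ⟨_, hlt i⟩, fun i => ?_⟩
    have h1 := Nat.floor_le (mul_nonneg (hx i).1.le hN0.le)
    have h2 := Nat.lt_floor_add_one (x i * (N + 1))
    have e : x i - (((⌊x i * (N + 1)⌋₊ : ℕ) : ℝ) + 1 / 2) / ((N : ℝ) + 1)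
        = (x i * (N + 1) - ((⌊x i * (N + 1)⌋₊ : ℝ) + 1 / 2)) / (N + 1) := by
      field_simp
    simp only [y]
    rw [e, abs_div, abs_of_pos hN0]
    gcongr
    exact abs_le.2 ⟨by linarith, by linarith⟩
  obtain ⟨t, -, htfin, ht⟩ := (isCompact_closedBall (0 : A → ℝ) 1).finite_cover_balls
    (e := ε / 4) (by positivity)
  have hsel : ∀ f : coordHolder m k α 1 1, ∃ c : t, ∀ a, |f.1 (y a) - c.1 a| ≤ ε / 4 := by
    intro f
    have : (fun a => f.1 (y a)) ∈ Metric.closedBall (0 : A → ℝ) 1 := by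
      rw [mem_closedBall_zero_iff, pi_norm_le_iff_of_nonneg zero_le_one]
      exact fun a => f.2.2 _ (hy a)
    obtain ⟨c, hc, hfc⟩ := Set.mem_iUnion₂.1 (ht this)
    exact ⟨⟨c, hc⟩, fun a => (dist_le_pi_dist (fun a => f.1 (y a)) c a).trans
      (Metric.mem_ball.1 hfc).le⟩
  choose idx hidx using hsel
  have := htfin.fintype
  refine ⟨Fintype.card t, by positivity, t, inferInstance, idx, ?_, ?_⟩
  · linarith [Real.add_one_le_exp (Fintype.card t : ℝ)]
  · intro f g hfg x hx
    obtain ⟨a, ha⟩ := hnear x hx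
    have h1 := h f.1 f.2 x hx _ (hy a) _ ha
    have h2 := h g.1 g.2 x hx _ (hy a) _ ha
    have h3 := hidx f a
    have h4 := hidx g a
    rw [hfg] at h3
    rw [abs_le] at *
    constructor <;> linarith

/-- Every point of the open cube lies in an open subcube of side `2 / N` with corner in
`N⁻¹ ℤ^m`. -/
theorem exists_subcube {N : ℕ} (hN : 2 ≤ N) {m : ℕ} {x : Fin m → ℝ} (hx : x ∈ cubeo m) :
    ∃ (a : Fin m → Fin (N - 1)) (z : Fin m → ℝ), z ∈ cubeo m ∧
      x = fun i => ((a i : ℕ) : ℝ) / N + 2 / N * z i := by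
  have hN0 : (0 : ℝ) < N := by positivity
  have h1 : ∀ t ∈ Ioo (0 : ℝ) 1, ∃ a : Fin (N - 1), ((a : ℕ) : ℝ) < t * N ∧
      t * N < ((a : ℕ) : ℝ) + 2 := by
    intro t ht
    have hpos : 0 < t * N := mul_pos ht.1 hN0
    have hlt : t * N < N := mul_lt_of_lt_one_left hN0 ht.2
    have hc0 : 0 < ⌈t * N⌉₊ := Nat.ceil_pos.2 hpos
    have hc1 := Nat.ceil_lt_add_one hpos.le
    have hc2 := Nat.le_ceil (t * N)
    by_cases hle : ⌈t * N⌉₊ ≤ N - 1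
    · refine ⟨⟨⌈t * N⌉₊ - 1, by omega⟩, ?_⟩
      simp only [Nat.cast_sub (show 1 ≤ ⌈t * N⌉₊ from hc0), Nat.cast_one]
      constructor <;> linarith
    · refine ⟨⟨N - 2, by omega⟩, ?_⟩
      have : (N : ℝ) ≤ ⌈t * N⌉₊ := by exact_mod_cast (by omega : N ≤ ⌈t * N⌉₊)
      simp only [Nat.cast_sub hN, Nat.cast_ofNat]
      constructor <;> linarith
  rw [mem_cubeo] at hx
  choose a ha ha' using fun i => h1 (x i) (hx i)
  refine ⟨a, fun i => (x i * N - (a i : ℕ)) / 2, mem_cubeo.2 fun i => ⟨?_, ?_⟩, ?_⟩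
  · linarith [ha i]
  · linarith [ha' i]
  · ext i
    field_simp
    ring

theorem rescale_mem_coordHolder {m k : ℕ} {α L B h ε : ℝ} {y : Fin m → ℝ}
    {f g : (Fin m → ℝ) → ℝ} (hf : f ∈ coordHolder m k α L B) (hg : g ∈ coordHolder m k α L B)
    (hy : ∀ i, 0 ≤ y i) (hh : 0 < h) (hyh : ∀ i, y i + h ≤ 1) (hε : 0 < ε)
    (hLε : 2 * L * (h ^ k * h ^ α) ≤ ε) (hfg : ∀ x ∈ cubeo m, |f x - g x| ≤ ε) :
    (fun x => (f (fun i => y i + h * x i) - g (fun i => y i + h * x i)) / ε) ∈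
      coordHolder m k α 1 1 := by
  have hmem : ∀ x ∈ cubeo m, (fun i => y i + h * x i) ∈ cubeo m := fun x hx =>
    mem_cubeo.2 fun i => by
      have hi := mem_cubeo.1 hx i
      exact ⟨by nlinarith [mul_pos hh hi.1, hy i], by nlinarith [hi.2, hyh i]⟩
  refine ⟨fun i x hx => ?_, fun x hx => ?_⟩
  · have e : ∀ t, (fun j => y j + h * Function.update x i t j) =
        Function.update (fun j => y j + h * x j) i (y i + h * t) := by
      intro t
      ext j
      by_cases hj : j = i
      · subst hj; simp
      · simp [hj]
    simp only [e]
    exact lineHolder_rescale (hf.1 i _ (hmem x hx)) (hg.1 i _ (hmem x hx)) (hy i) hh (hyh i) hε hLε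
  · rw [abs_div, abs_of_pos hε, div_le_one hε]
    exact hfg _ (hmem x hx)

/-- Refining a cell decomposition on all subcubes of one scale. -/
theorem HasCells.refine {m k : ℕ} {α L B T T₀ ρ ε : ℝ} {N : ℕ} (hN : 2 ≤ N) (hε : 0 < ε)
    (hT₀ : 0 ≤ T₀) (hLε : 2 * L * ((2 / (N : ℝ)) ^ k * (2 / (N : ℝ)) ^ α) ≤ ε)
    (hU : HasCells (cubeo m) (coordHolder m k α 1 1) T₀ ρ)
    (hF : HasCells (cubeo m) (coordHolder m k α L B) T ε) :
    HasCells (cubeo m) (coordHolder m k α L B) (T + (N : ℝ) ^ m * T₀) (ρ * ε) := by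
  classical
  obtain ⟨κ, _, jdx, hcU, hU⟩ := hU
  obtain ⟨ι, _, idx, hcF, hF⟩ := hF
  have hN0 : (0 : ℝ) < N := by positivity
  choose rep hrep using fun i : Set.range idx => i.2
  let r : coordHolder m k α L B → coordHolder m k α L B := fun f => rep ⟨idx f, f, rfl⟩
  have hr : ∀ f, idx (r f) = idx f := fun f => hrep _
  have hr' : ∀ f g, idx f = idx g → r f = r g := fun f g h => by simp only [r, h]
  let u : coordHolder m k α L B → (Fin m → Fin (N - 1)) → (Fin m → ℝ) → ℝ := fun f a x =>
    (f.1 (fun i => ((a i : ℕ) : ℝ) / N + 2 / N * x i) -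
      (r f).1 (fun i => ((a i : ℕ) : ℝ) / N + 2 / N * x i)) / ε
  have hu : ∀ f a, u f a ∈ coordHolder m k α 1 1 := by
    intro f a
    refine rescale_mem_coordHolder (y := fun i => ((a i : ℕ) : ℝ) / N) f.2 (r f).2
      (fun i => by positivity) (by positivity) (fun i => ?_) hε hLε (hF f (r f) (hr f).symm)
    have : (((a i : ℕ) + 2 : ℕ) : ℝ) ≤ N := by
      have := (a i).2
      exact_mod_cast (by omega : (a i : ℕ) + 2 ≤ N)
    push_cast at this
    rw [← add_div, div_le_one hN0]
    exact this
  refine ⟨ι × ((Fin m → Fin (N - 1)) → κ), inferInstance,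
    fun f => (idx f, fun a => jdx ⟨u f a, hu f a⟩), ?_, ?_⟩
  · have hcard : Fintype.card (ι × ((Fin m → Fin (N - 1)) → κ)) =
        Fintype.card ι * Fintype.card κ ^ (N - 1) ^ m := by simp
    rw [hcard, Real.exp_add]
    push_cast
    refine mul_le_mul hcF ?_ (by positivity) (by positivity)
    calc (Fintype.card κ : ℝ) ^ (N - 1) ^ m ≤ Real.exp T₀ ^ (N - 1) ^ m := by gcongr
      _ ≤ Real.exp T₀ ^ N ^ m :=
        pow_le_pow_right₀ (Real.one_le_exp hT₀) (Nat.pow_le_pow_left (by omega) m)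
      _ = _ := by rw [← Real.exp_nat_mul]; push_cast; rfl
  · intro f g hfg x hx
    obtain ⟨h1, h2⟩ := Prod.mk_inj.1 hfg
    obtain ⟨a, z, hz, rfl⟩ := exists_subcube hN hx
    have h3 := hU _ _ (congrFun h2 a) z hz
    simp only [u, hr' f g h1] at h3
    rw [← sub_div, abs_div, abs_of_pos hε, div_le_iff₀ hε, sub_sub_sub_cancel_right] at h3
    exact h3

theorem hasCells_coordHolder_pow {m k : ℕ} (hm : 0 < m) {α L B T₀ E : ℝ} (hT₀ : 0 ≤ T₀)
    (hE : 0 < E) (hEL : 2 * L ≤ E) (hEB : 2 * B ≤ E)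
    (hU : HasCells (cubeo m) (coordHolder m k α 1 1) T₀ (2 ^ k * 2 ^ α)⁻¹) (J : ℕ) :
    HasCells (cubeo m) (coordHolder m k α L B) (T₀ * 2 ^ m * (2 ^ J) ^ m)
      (((2 ^ k * 2 ^ α)⁻¹) ^ J * E) := by
  induction J with
  | zero =>
    have : HasCells (cubeo m) (coordHolder m k α L B) 0 E := by
      refine ⟨Unit, inferInstance, fun _ => (), by simp, fun f g _ x hx => ?_⟩
      have h1 := f.2.2 x hx
      have h2 := g.2.2 x hx
      exact (abs_sub _ _).trans (by linarith)
    exact this.mono subset_rfl (by positivity) (by simp)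
  | succ J ih =>
    have hstep := HasCells.refine (N := 2 ^ (J + 1))
      (by simpa using Nat.pow_le_pow_right (n := 2) (by norm_num) (Nat.succ_le_succ J.zero_le))
      (by positivity) hT₀ ?_ hU ih
    · refine hstep.mono subset_rfl ?_ (le_of_eq (by ring))
      have hm2 : (2 : ℝ) ≤ 2 ^ m := by
        simpa using pow_le_pow_right₀ (one_le_two (α := ℝ)) hm
      have h0 : 0 ≤ T₀ * 2 ^ m * (2 ^ J) ^ m := by positivity
      calc T₀ * 2 ^ m * (2 ^ J) ^ m + ((2 ^ (J + 1) : ℕ) : ℝ) ^ m * T₀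
          = 2 * (T₀ * 2 ^ m * (2 ^ J) ^ m) := by push_cast; rw [pow_succ, mul_pow]; ring
        _ ≤ 2 ^ m * (T₀ * 2 ^ m * (2 ^ J) ^ m) := by gcongr
        _ = _ := by rw [pow_succ, mul_pow]; ring
    · have e : (2 : ℝ) / ((2 ^ (J + 1) : ℕ) : ℝ) = (2 ^ J)⁻¹ := by
        push_cast; field_simp; ring
      have e2 : ((2 : ℝ) ^ J) ^ α = (2 ^ α) ^ J := by
        rw [← Real.rpow_natCast, ← Real.rpow_natCast, ← Real.rpow_mul zero_le_two,
          ← Real.rpow_mul zero_le_two, mul_comm]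
      rw [e, Real.inv_rpow (by positivity), e2]
      have e3 : (((2 : ℝ) ^ J)⁻¹ ^ k * ((2 ^ α) ^ J)⁻¹) = ((2 ^ k * 2 ^ α)⁻¹) ^ J := by
        rw [inv_pow, inv_pow, mul_pow, mul_inv, ← pow_mul, ← pow_mul, mul_comm J k]
      rw [e3, mul_comm]
      gcongr

theorem hasCells_coordHolder {m k : ℕ} (hm : 0 < m) {α L B : ℝ} (hα : 0 < α) :
    ∃ c : ℝ, 0 < c ∧ ∀ γ : ℝ, 0 < γ → γ ≤ 1 →
      HasCells (cubeo m) (coordHolder m k α L B) (c * (1 / γ) ^ ((m : ℝ) / (k + α))) γ := by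
  have hβ : 0 < (k : ℝ) + α := by positivity
  obtain ⟨T₀, hT₀, hU⟩ := exists_hasCells_coordHolder m k (ε := (2 ^ k * 2 ^ α)⁻¹) hα
    (by positivity)
  set E : ℝ := max 1 (max (2 * L) (2 * B)) with hEdef
  have hE1 : 1 ≤ E := le_max_left _ _
  have hE : 0 < E := by linarith
  refine ⟨T₀ * 2 ^ m * 2 ^ m * E ^ ((m : ℝ) / (k + α)) + 1, by positivity, fun γ hγ hγ1 => ?_⟩
  have hEγ : 1 ≤ E / γ := by rw [le_div_iff₀ hγ]; linarith
  obtain ⟨n, hn1, hn2⟩ := exists_nat_pow_near (Real.one_le_rpow hEγ (inv_pos.2 hβ).le)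
    (one_lt_two (α := ℝ))
  refine (hasCells_coordHolder_pow hm hT₀ hE ((le_max_left _ _).trans (le_max_right _ _))
    ((le_max_right _ _).trans (le_max_right _ _)) hU (n + 1)).mono subset_rfl ?_ ?_
  · have h1 : ((2 : ℝ) ^ n) ^ m ≤ (E / γ) ^ ((m : ℝ) / (k + α)) := by
      calc ((2 : ℝ) ^ n) ^ m ≤ ((E / γ) ^ ((k : ℝ) + α)⁻¹) ^ m := by gcongr
        _ = _ := by
          rw [← Real.rpow_natCast, ← Real.rpow_mul (by positivity), div_eq_inv_mul (m : ℝ)]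
    have h2 : (E / γ) ^ ((m : ℝ) / (k + α)) =
        E ^ ((m : ℝ) / (k + α)) * (1 / γ) ^ ((m : ℝ) / (k + α)) := by
      rw [← Real.mul_rpow hE.le (by positivity), mul_one_div]
    rw [h2] at h1
    have h3 : 0 ≤ (1 / γ) ^ ((m : ℝ) / (k + α)) := by positivity
    calc T₀ * 2 ^ m * (2 ^ (n + 1)) ^ m = T₀ * 2 ^ m * 2 ^ m * (2 ^ n) ^ m := by
          rw [pow_succ, mul_pow]; ring
      _ ≤ T₀ * 2 ^ m * 2 ^ m * (E ^ ((m : ℝ) / (k + α)) * (1 / γ) ^ ((m : ℝ) / (k + α))) := by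
          gcongr
      _ ≤ _ := by linarith
  · have e : ((2 : ℝ) ^ k * 2 ^ α) ^ (n + 1) = (2 ^ (n + 1)) ^ ((k : ℝ) + α) := by
      rw [← Real.rpow_natCast 2 k, ← Real.rpow_add zero_lt_two, ← Real.rpow_natCast,
        ← Real.rpow_natCast, ← Real.rpow_mul zero_le_two, ← Real.rpow_mul zero_le_two, mul_comm]
    rw [inv_pow, e, inv_mul_le_iff₀ (by positivity), ← div_le_iff₀ hγ]
    calc E / γ = ((E / γ) ^ ((k : ℝ) + α)⁻¹) ^ ((k : ℝ) + α) := by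
          rw [← Real.rpow_mul (by positivity), inv_mul_cancel₀ hβ.ne', Real.rpow_one]
      _ ≤ _ := by gcongr

theorem idxList_single {m : ℕ} (i : Fin m) (k : ℕ) :
    idxList (Pi.single i k) = List.replicate k i := by
  rw [List.eq_replicate_iff]
  constructor
  · rw [idxList, List.length_flatMap]
    simp only [List.length_replicate]
    rw [← List.ofFn_eq_map, List.sum_ofFn]
    simp
  · intro b hb
    simp only [idxList, List.mem_flatMap, List.mem_replicate] at hb
    obtain ⟨a, -, h1, rfl⟩ := hb
    by_contra hne
    exact h1 (by simp [hne])

theorem mord_single {m : ℕ} (i : Fin m) (k : ℕ) : mord (Pi.single i k) = k := by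
  simp [mord]

/-- The partial derivative in the direction of the `i`-th coordinate. -/
def partialDeriv {m : ℕ} (i : Fin m) (f : (Fin m → ℝ) → ℝ) : (Fin m → ℝ) → ℝ :=
  fun x => fderiv ℝ f x (Pi.single i 1)

theorem Dm_single {m : ℕ} (i : Fin m) (k : ℕ) (f : (Fin m → ℝ) → ℝ) :
    Dm (Pi.single i k) f = (partialDeriv i)^[k] f := by
  rw [Dm, idxList_single]
  induction k generalizing f with
  | zero => rfl
  | succ k ih =>
    rw [List.replicate_succ, Function.iterate_succ_apply, ← ih]
    rfl

theorem contDiffOn_iterate_partialDeriv {m : ℕ} (i : Fin m) {S : Set (Fin m → ℝ)} (hS : IsOpen S)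
    (j n : ℕ) {f : (Fin m → ℝ) → ℝ} (hf : ContDiffOn ℝ ((n + j : ℕ) : ℕ∞) f S) :
    ContDiffOn ℝ (n : ℕ∞) ((partialDeriv i)^[j] f) S := by
  induction j generalizing n with
  | zero => simpa using hf
  | succ j ih =>
    rw [Function.iterate_succ_apply']
    have h1 := ih (n + 1) (by convert hf using 3; ring)
    exact (h1.fderiv_of_isOpen hS (by norm_cast)).clm_apply contDiffOn_const

theorem e2_update {m : ℕ} (x : Fin m → ℝ) (i : Fin m) (s t : ℝ) :
    e2 (Function.update x i s) (Function.update x i t) = |s - t| := by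
  rw [e2, Finset.sum_eq_single i]
  · simp [Real.sqrt_sq_eq_abs]
  · intro j _ hj
    simp [hj]
  · simp

theorem smoothOrder_eq {β : ℝ} (hβ : 0 < β) : (smoothOrder β : ℝ) = (⌈β⌉ : ℝ) - 1 := by
  have h1 : ((smoothOrder β : ℕ) : ℤ) = ⌈β⌉ - 1 := by
    rw [smoothOrder, Int.natCast_ceil_eq_ceil_of_neg_one_lt (by linarith), Int.ceil_sub_one]
  exact_mod_cast h1

theorem holderBall_subset_coordHolder (m : ℕ) {β r : ℝ} (hβ : 0 < β) (hr : 0 < r) :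
    HolderBall m β r ⊆ coordHolder m (smoothOrder β) (β - smoothOrder β) r r := by
  rintro f ⟨-, hsmooth, -, hnorm⟩
  have hk := smoothOrder_lt hβ
  refine ⟨fun i x hx => ?_, fun x hx => ?_⟩
  · refine ⟨fun j t => (partialDeriv i)^[j] f (Function.update x i t), rfl, ?_, ?_⟩
    · intro j hj t ht
      have hmem := update_mem_cubeo hx i ht
      have h1 : ContDiffOn ℝ ((1 : ℕ) : ℕ∞) ((partialDeriv i)^[j] f) (cubeo m) := by
        refine contDiffOn_iterate_partialDeriv i (isOpen_cubeo m) j 1 (hsmooth.of_le ?_)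
        exact_mod_cast (by omega : 1 + j ≤ smoothOrder β)
      have h2 : DifferentiableAt ℝ ((partialDeriv i)^[j] f) (Function.update x i t) :=
        (h1.differentiableOn (by simp)).differentiableAt ((isOpen_cubeo m).mem_nhds hmem)
      have h3 := h2.hasFDerivAt.comp_hasDerivAt t (hasDerivAt_update x i t)
      simp only [Function.iterate_succ_apply']
      exact h3
    · intro s hs t ht
      rcases eq_or_ne s t with rfl | hst
      · simp only [sub_self, abs_zero]; positivity
      have hne : Function.update x i s ≠ Function.update x i t :=
        fun h => hst (Function.update_injective x i h)
      have h1 := le_add_self.trans hnorm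
      simp only [iSup_le_iff] at h1
      have h2 := h1 (Pi.single i (smoothOrder β))
        (by rw [mord_single]; exact ⟨(smoothOrder_eq hβ).ge, hk⟩)
        _ (update_mem_cubeo hx i hs) _ (update_mem_cubeo hx i ht) hne
      rw [e2_update, Dm_single] at h2
      have hpos : 0 < |s - t| := abs_pos.2 (sub_ne_zero.2 hst)
      rw [ENNReal.ofReal_rpow_of_pos hpos, ← ENNReal.ofReal_div_of_pos (by positivity),
        ENNReal.ofReal_le_ofReal_iff hr.le, div_le_iff₀ (by positivity)] at h2
      have e : β + 1 - (⌈β⌉ : ℝ) = β - smoothOrder β := by rw [smoothOrder_eq hβ]; ring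
      rwa [e] at h2
  · have h1 := le_self_add.trans hnorm
    simp only [iSup_le_iff] at h1
    have h2 := h1 0 (by simpa [mord] using hβ) x hx
    have e : Dm (0 : Fin m → ℕ) f = f := by
      have : idxList (0 : Fin m → ℕ) = [] := by simp [idxList]
      rw [Dm, this]; rfl
    rwa [e, ENNReal.ofReal_le_ofReal_iff hr.le] at h2

/-- Contraction of the cube towards its centre. -/
def shrink {m : ℕ} (x : Fin m → ℝ) (t : ℝ) : Fin m → ℝ := fun i => (1 - t) * x i + t * (1 / 2)

theorem shrink_mem_cubeo {m : ℕ} {x : Fin m → ℝ} (hx : x ∈ cube m) {t : ℝ}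
    (ht : t ∈ Ioo (0 : ℝ) 1) : shrink x t ∈ cubeo m := by
  refine mem_cubeo.2 fun i => ?_
  have hi := mem_cube.1 hx i
  have h1 : 0 ≤ (1 - t) * x i := mul_nonneg (by linarith [ht.2]) hi.1
  have h2 : 0 ≤ (1 - t) * (1 - x i) := mul_nonneg (by linarith [ht.2]) (by linarith [hi.2])
  constructor <;> simp only [shrink] <;> linarith [ht.1]

theorem tendsto_shrink {m : ℕ} {f : (Fin m → ℝ) → ℝ} (hf : ContinuousOn f (cube m))
    {x : Fin m → ℝ} (hx : x ∈ cube m) :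
    Filter.Tendsto (fun t => f (shrink x t)) (nhdsWithin 0 (Ioi 0)) (nhds (f x)) := by
  have h1 : Filter.Tendsto (shrink x) (nhdsWithin 0 (Ioi 0)) (nhds x) := by
    have hc : Continuous (shrink x) := by unfold shrink; fun_prop
    have h0 : shrink x 0 = x := by ext i; simp [shrink]
    have := (hc.tendsto 0).mono_left (nhdsWithin_le_nhds (s := Ioi 0))
    rwa [h0] at this
  refine (hf x hx).tendsto.comp (tendsto_nhdsWithin_iff.2 ⟨h1, ?_⟩)
  filter_upwards [Ioo_mem_nhdsGT (zero_lt_one' ℝ)] with t ht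
  exact cubeo_subset_cube m (shrink_mem_cubeo hx ht)

theorem modExp_smoothOrder {β : ℝ} (hβ : 0 < β) :
    modExp (smoothOrder β) (β - smoothOrder β) = min 1 β := by
  unfold modExp
  split_ifs with h
  · rw [h, Nat.cast_zero, sub_zero, min_eq_right]
    rw [smoothOrder, Nat.ceil_eq_zero] at h
    linarith
  · rw [min_eq_left]
    have h1 : (1 : ℝ) ≤ smoothOrder β := by exact_mod_cast Nat.one_le_iff_ne_zero.2 h
    linarith [smoothOrder_lt hβ]

theorem holderBall_modulus (m : ℕ) {β r : ℝ} (hβ : 0 < β) (hr : 0 < r) :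
    ∃ C : ℝ, 0 ≤ C ∧ ∀ f ∈ HolderBall m β r, ∀ x ∈ cube m, ∀ z ∈ cube m, ∀ s : ℝ,
      (∀ i, |x i - z i| ≤ s) → |f x - f z| ≤ C * s ^ min 1 β := by
  obtain ⟨C, hC, h⟩ := coordHolder_modulus m (smoothOrder β)
    (sub_pos.2 (smoothOrder_lt hβ)) hr.le hr.le
  refine ⟨C, hC, fun f hf x hx z hz s hs => ?_⟩
  refine le_of_tendsto ((tendsto_shrink hf.1 hx).sub (tendsto_shrink hf.1 hz)).abs ?_
  filter_upwards [Ioo_mem_nhdsGT (zero_lt_one' ℝ)] with t ht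
  rw [← modExp_smoothOrder hβ]
  refine h f (holderBall_subset_coordHolder m hβ hr hf) _ (shrink_mem_cubeo hx ht) _
    (shrink_mem_cubeo hz ht) s fun i => ?_
  have e : shrink x t i - shrink z t i = (1 - t) * (x i - z i) := by simp only [shrink]; ring
  rw [e, abs_mul, abs_of_pos (by linarith [ht.2])]
  exact (mul_le_of_le_one_left (abs_nonneg _) (by linarith [ht.1])).trans (hs i)

theorem hasCells_holderBall {m : ℕ} (hm : 0 < m) {β r : ℝ} (hβ : 0 < β) (hr : 0 < r) :
    ∃ c : ℝ, 0 < c ∧ ∀ γ : ℝ, 0 < γ → γ ≤ 1 →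
      HasCells (cube m) (HolderBall m β r) (c * (1 / γ) ^ ((m : ℝ) / β)) γ := by
  obtain ⟨c, hc, h⟩ := hasCells_coordHolder (k := smoothOrder β) (L := r) (B := r) hm
    (sub_pos.2 (smoothOrder_lt hβ))
  refine ⟨c, hc, fun γ hγ hγ1 => ?_⟩
  obtain ⟨ι, _, idx, hcard, h⟩ := (h γ hγ hγ1).mono (holderBall_subset_coordHolder m hβ hr)
    le_rfl le_rfl
  rw [add_sub_cancel] at hcard
  refine ⟨ι, inferInstance, idx, hcard, fun f g hfg x hx => ?_⟩
  refine le_of_tendsto ((tendsto_shrink f.2.1 hx).sub (tendsto_shrink g.2.1 hx)).abs ?_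
  filter_upwards [Ioo_mem_nhdsGT (zero_lt_one' ℝ)] with t ht
  exact h f g hfg _ (shrink_mem_cubeo hx ht)

/-! ## Compositions -/

theorem GM_modulus {m dmax : ℕ} {f : (Fin m → ℝ) → ℝ} (hf : f ∈ GM m dmax) {a : ℝ} (ha : 0 < a)
    (ha1 : a ≤ 1) {x z : Fin m → ℝ} (hx : x ∈ cube m) (hz : z ∈ cube m) {s : ℝ}
    (hs : ∀ i, |x i - z i| ≤ s) : |f x - f z| ≤ s ^ a := by
  obtain ⟨I, hI, -, hf⟩ := hf
  obtain ⟨i₀, -⟩ := id hI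
  have hs0 : 0 ≤ s := (abs_nonneg _).trans (hs i₀)
  have key : ∀ w v : Fin m → ℝ, w ∈ cube m → v ∈ cube m → (∀ i, |w i - v i| ≤ s) →
      I.sup' hI (fun i => w i) - I.sup' hI (fun i => v i) ≤ s ^ a := by
    intro w v hw hv hwv
    obtain ⟨i, hi, e⟩ := I.exists_mem_eq_sup' hI fun i => w i
    have h1 : v i ≤ I.sup' hI fun i => v i := Finset.le_sup' (fun i => v i) hi
    have h2 := (abs_le.1 (hwv i)).2
    rw [e]
    rcases le_total s 1 with h | h
    · have : s ^ (1 : ℝ) ≤ s ^ a := Real.rpow_le_rpow_of_exponent_ge_of_imp hs0 h ha1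
        (fun _ h => absurd h one_ne_zero)
      rw [Real.rpow_one] at this
      linarith
    · have := Real.one_le_rpow h ha.le
      linarith [(mem_cube.1 hw i).2, (mem_cube.1 hv i).1]
  rw [hf x hx, hf z hz, abs_sub_le_iff]
  exact ⟨key x z hx hz hs, key z x hz hx fun i => by rw [abs_sub_comm]; exact hs i⟩

theorem GH_union_GM_modulus (m dmax dstar : ℕ) {β r : ℝ} (hβ : 0 < β) (hr : 0 < r) :
    ∃ C : ℝ, 1 ≤ C ∧ ∀ f ∈ GH m dstar β r ∪ GM m dmax, ∀ x ∈ cube m, ∀ z ∈ cube m, ∀ s : ℝ,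
      0 ≤ s → (∀ i, |x i - z i| ≤ s) → |f x - f z| ≤ C * s ^ min 1 β := by
  obtain ⟨C, hC, h⟩ := holderBall_modulus dstar hβ hr
  refine ⟨C + 1, by linarith, ?_⟩
  rintro f (⟨e, g, -, hg, hfg⟩ | hf) x hx z hz s hs0 hs
  · rw [hfg x hx, hfg z hz]
    refine (h g hg _ (mem_cube.2 fun j => mem_cube.1 hx _) _ (mem_cube.2 fun j => mem_cube.1 hz _)
      s fun j => hs _).trans ?_
    gcongr
    linarith
  · refine (GM_modulus hf (lt_min one_pos hβ) (min_le_left _ _) hx hz hs).trans ?_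
    exact le_mul_of_one_le_left (by positivity) (by linarith)

theorem GCHOM_modulus (K dmax dstar : ℕ) {β r : ℝ} (hβ : 0 < β) (hr : 0 < r) (q : ℕ) :
    ∀ d : ℕ, ∃ C : ℝ, 1 ≤ C ∧ ∀ f ∈ GCHOM K dmax dstar β r q d, ∀ x ∈ cube d, ∀ z ∈ cube d,
      ∀ s : ℝ, 0 ≤ s → (∀ i, |x i - z i| ≤ s) → |f x - f z| ≤ C * s ^ (min 1 β ^ (q + 1)) := by
  have ha : 0 < min 1 β := lt_min one_pos hβ
  induction q with
  | zero =>
    intro d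
    obtain ⟨C, hC, h⟩ := GH_union_GM_modulus d dmax dstar hβ hr
    refine ⟨C, hC, ?_⟩
    rintro f ⟨g, hg, hfg⟩ x hx z hz s hs0 hs
    rw [hfg x hx, hfg z hz, zero_add, pow_one]
    exact h g hg x hx z hz s hs0 hs
  | succ q ih =>
    intro d
    obtain ⟨C₁, hC₁, h₁⟩ := GH_union_GM_modulus d dmax dstar hβ hr
    obtain ⟨C₂, hC₂, h₂⟩ := ih K
    refine ⟨C₂ * C₁ ^ (min 1 β ^ (q + 1)), ?_, ?_⟩
    · exact one_le_mul_of_one_le_of_one_le hC₂ (Real.one_le_rpow hC₁ (by positivity))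
    rintro f ⟨H, g, hH, hHc, hg, hfg⟩ x hx z hz s hs0 hs
    rw [hfg x hx, hfg z hz]
    refine (h₂ g hg _ (hHc x hx) _ (hHc z hz) (C₁ * s ^ min 1 β) (by positivity)
      fun j => h₁ _ (hH j) x hx z hz s hs0 hs).trans (le_of_eq ?_)
    rw [Real.mul_rpow (by positivity) (by positivity), ← Real.rpow_mul hs0, ← pow_succ', mul_assoc]

theorem hasCells_GM (m dmax : ℕ) :
    ∃ T : ℝ, 0 ≤ T ∧ ∀ ε : ℝ, 0 ≤ ε → HasCells (cube m) (GM m dmax) T ε := by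
  refine ⟨Fintype.card {I : Finset (Fin m) // I.Nonempty} + 0, by positivity, fun ε hε => ?_⟩
  refine (HasCells.iUnion (F := fun I : {I : Finset (Fin m) // I.Nonempty} =>
    {f : (Fin m → ℝ) → ℝ | ∀ x ∈ cube m, f x = I.1.sup' I.2 fun i => x i}) fun I =>
      hasCells_of_eqOn hε fun f hf g hg x hx => ?_).mono ?_ le_rfl le_rfl
  · exact (hf x hx).trans (hg x hx).symm
  · rintro f ⟨I, hI, -, hf⟩
    exact Set.mem_iUnion.2 ⟨⟨I, hI⟩, hf⟩

theorem hasCells_GH_union_GM (m dmax : ℕ) {dstar : ℕ} (hdstar : 0 < dstar) {β r : ℝ}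
    (hβ : 0 < β) (hr : 0 < r) :
    ∃ c : ℝ, 0 < c ∧ ∀ γ : ℝ, 0 < γ → γ ≤ 1 →
      HasCells (cube m) (GH m dstar β r ∪ GM m dmax) (c * (1 / γ) ^ ((dstar : ℝ) / β)) γ := by
  obtain ⟨c, hc, h⟩ := hasCells_holderBall hdstar hβ hr
  obtain ⟨T, hT, hGM⟩ := hasCells_GM m dmax
  refine ⟨c + T + Fintype.card (Option (Fin dstar → Fin m)), by positivity, fun γ hγ hγ1 => ?_⟩
  have hone : 1 ≤ (1 / γ) ^ ((dstar : ℝ) / β) :=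
    Real.one_le_rpow (by rw [le_div_iff₀ hγ]; linarith) (by positivity)
  let F : Option (Fin dstar → Fin m) → Set ((Fin m → ℝ) → ℝ)
    | none => GM m dmax
    | some e => {f | ∃ g ∈ HolderBall dstar β r, ∀ x ∈ cube m, f x = g fun j => x (e j)}
  have hF : ∀ j, HasCells (cube m) (F j) (c * (1 / γ) ^ ((dstar : ℝ) / β) + T) γ := by
    rintro (_ | e)
    · exact (hGM γ hγ.le).mono subset_rfl (le_add_of_nonneg_left (by positivity)) le_rfl
    · refine ((h γ hγ hγ1).comp (fun x j => x (e j)) ?_ fun f hf => hf).mono subset_rfl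
        (le_add_of_nonneg_right hT) le_rfl
      exact fun x hx => mem_cube.2 fun j => mem_cube.1 hx _
  refine (HasCells.iUnion hF).mono ?_ ?_ le_rfl
  · rintro f (⟨e, g, -, hg, hfg⟩ | hf)
    · exact Set.mem_iUnion.2 ⟨some e, g, hg, hfg⟩
    · exact Set.mem_iUnion.2 ⟨none, hf⟩
  · have h1 := le_mul_of_one_le_right hT hone
    have h2 := le_mul_of_one_le_right
      (Nat.cast_nonneg (α := ℝ) (Fintype.card (Option (Fin dstar → Fin m)))) hone
    rw [add_mul, add_mul]
    linarith

/-- Cell decompositions of a class of compositions. -/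
theorem HasCells.compose {d K : ℕ} {F : Set ((Fin d → ℝ) → ℝ)} {P : Set ((Fin d → ℝ) → ℝ)}
    {G : Set ((Fin K → ℝ) → ℝ)} {T₁ T₂ δ ε ω : ℝ} (hP : HasCells (cube d) P T₁ δ)
    (hG : HasCells (cube K) G T₂ ε)
    (hω : ∀ g ∈ G, ∀ x ∈ cube K, ∀ z ∈ cube K, (∀ i, |x i - z i| ≤ δ) → |g x - g z| ≤ ω)
    (hF : ∀ f ∈ F, ∃ (H : (Fin d → ℝ) → Fin K → ℝ) (g : (Fin K → ℝ) → ℝ),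
      (∀ j, (fun x => H x j) ∈ P) ∧ (∀ x ∈ cube d, H x ∈ cube K) ∧ g ∈ G ∧
        ∀ x ∈ cube d, f x = g (H x)) :
    HasCells (cube d) F (K * T₁ + T₂) (ω + ε) := by
  obtain ⟨ι, _, idx, hcP, hP⟩ := hP
  obtain ⟨κ, _, jdx, hcG, hG⟩ := hG
  choose H g hH hHc hg hfg using fun f : F => hF f.1 f.2
  refine ⟨(Fin K → ι) × κ, inferInstance, fun f => (fun j => idx ⟨_, hH f j⟩, jdx ⟨g f, hg f⟩),
    ?_, ?_⟩
  · have hcard : Fintype.card ((Fin K → ι) × κ) = Fintype.card ι ^ K * Fintype.card κ := by simp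
    rw [hcard, Real.exp_add, Real.exp_nat_mul]
    push_cast
    gcongr
  · intro f f' hff x hx
    obtain ⟨h1, h2⟩ := Prod.mk_inj.1 hff
    rw [hfg f x hx, hfg f' x hx]
    have h3 := hω (g f) (hg f) _ (hHc f x hx) _ (hHc f' x hx) fun j => hP _ _ (congrFun h1 j) x hx
    have h4 := hG _ _ h2 _ (hHc f' x hx)
    exact (abs_sub_le _ (g f (H f' x)) _).trans (add_le_add h3 h4)

theorem hasCells_GCHOM (K dmax : ℕ) {dstar : ℕ} (hdstar : 0 < dstar) {β r : ℝ}
    (hβ : 0 < β) (hr : 0 < r) (q : ℕ) :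
    ∀ d : ℕ, ∃ c : ℝ, 0 < c ∧ ∀ γ : ℝ, 0 < γ → γ ≤ 1 →
      HasCells (cube d) (GCHOM K dmax dstar β r q d)
        (c * (1 / γ) ^ ((dstar : ℝ) / (β * min 1 β ^ q))) γ := by
  have ha : 0 < min 1 β := lt_min one_pos hβ
  induction q with
  | zero =>
    intro d
    obtain ⟨c, hc, h⟩ := hasCells_GH_union_GM d dmax hdstar hβ hr
    refine ⟨c, hc, fun γ hγ hγ1 => ?_⟩
    rw [pow_zero, mul_one]
    exact (h γ hγ hγ1).comp id (fun x hx => hx) fun f hf => hf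
  | succ q ih =>
    intro d
    obtain ⟨c₁, hc₁, h₁⟩ := hasCells_GH_union_GM d dmax hdstar hβ hr
    obtain ⟨c₂, hc₂, h₂⟩ := ih K
    obtain ⟨C, hC, hmod⟩ := GCHOM_modulus K dmax dstar hβ hr q K
    set p : ℝ := min 1 β ^ (q + 1) with hp
    have hp0 : 0 < p := by positivity
    have hC0 : 0 < C := by linarith
    set u : ℝ := (dstar : ℝ) / (β * p) with hu
    set v : ℝ := (dstar : ℝ) / (β * min 1 β ^ q) with hv
    have hvu : v ≤ u := by
      rw [hu, hv, hp]
      have := pow_le_pow_of_le_one ha.le (min_le_left 1 β) (Nat.le_succ q)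
      gcongr (dstar : ℝ) / (β * ?_)
    refine ⟨K * (c₁ * (2 * C) ^ u) + c₂ * 2 ^ v, by positivity, fun γ hγ hγ1 => ?_⟩
    set δ : ℝ := (γ / (2 * C)) ^ p⁻¹ with hδ
    have hδ0 : 0 < δ := by positivity
    have hδ1 : δ ≤ 1 := Real.rpow_le_one (by positivity)
      (by rw [div_le_one (by positivity)]; linarith) (by positivity)
    have hδp : C * δ ^ p = γ / 2 := by
      rw [hδ, ← Real.rpow_mul (by positivity), inv_mul_cancel₀ hp0.ne', Real.rpow_one]
      field_simp
    have hcells := HasCells.compose (F := GCHOM K dmax dstar β r (q + 1) d) (h₁ δ hδ0 hδ1)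
      (h₂ (γ / 2) (by positivity) (by linarith))
      (fun g hg x hx z hz hxz => hmod g hg x hx z hz δ hδ0.le hxz) fun f hf => hf
    refine hcells.mono subset_rfl ?_ (by rw [hδp]; linarith)
    have e1 : (1 / δ) ^ ((dstar : ℝ) / β) = (2 * C) ^ u * (1 / γ) ^ u := by
      rw [← Real.mul_rpow (by positivity) (by positivity), hδ, one_div, ← Real.inv_rpow
        (by positivity), ← Real.rpow_mul (by positivity), inv_div, mul_one_div]
      congr 1
      rw [hu]
      field_simp
    have e2 : (1 / (γ / 2)) ^ v ≤ 2 ^ v * (1 / γ) ^ u := by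
      have : 1 / (γ / 2) = 2 * (1 / γ) := by field_simp
      rw [this, Real.mul_rpow zero_le_two (by positivity)]
      gcongr
      rw [le_div_iff₀ hγ]; linarith
    rw [e1]
    calc K * (c₁ * ((2 * C) ^ u * (1 / γ) ^ u)) + c₂ * (1 / (γ / 2)) ^ v
        ≤ K * (c₁ * ((2 * C) ^ u * (1 / γ) ^ u)) + c₂ * (2 ^ v * (1 / γ) ^ u) := by gcongr
      _ = _ := by ring

/-- Lemma 6.5 : covering-number bound for the compositional class. -/
theorem statement_11
    (d q K dmax dstar : ℕ) (hd : 0 < d) (hK : 0 < K) (hdmax : 0 < dmax) (hdstar : 0 < dstar)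
    (β r : ℝ) (hβ : 0 < β) (hr : 0 < r)
    (h1 : dstar ≤ d) (h2 : dstar * q ≤ K * q) :
    ∃ c : ℝ, 0 < c ∧
      ∀ γ : ℝ, 0 < γ → γ ≤ 1 →
        coveringNumber (cube d) (GCHOM K dmax dstar β r q d) γ ≤
          ENNReal.ofReal (Real.exp (c * (1 / γ) ^ ((dstar : ℝ) / (β * min 1 β ^ q)))) := by
  obtain ⟨c, hc, h⟩ := hasCells_GCHOM K dmax hdstar hβ hr q d
  exact ⟨c, hc, fun γ hγ hγ1 => (h γ hγ hγ1).coveringNumber_le⟩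

end ZZS
end
end
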